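/- arXiv:1810.08022 — 7 statements merged into one kernel-verified Lean document; each statement's English description precedes it below -/
import Mathlib

section
/- For every positive integer n and every complex number q with q ≠ 0 and q ≠ −1, the (2+q+q⁻¹)-enumeration of alternating sign matrices of size n equals d_{n,1}(0,q); that is, A_n(2+q+q⁻¹) = det_{1≤i,j≤n}( binom(i+j−2, j−1)·(1−(−q)^{j−i+1})/(1+q) ). -/
open Finset

noncomputable section

/-- A matrix is an alternating sign matrix: entries in {-1,0,1}, all row and column sums 1,
and all partial row and column sums (from the start) equal to 0 or 1. -/
def IsASM {n : ℕ} (A : Matrix (Fin n) (Fin n) ℤ) : Prop :=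
  (∀ i j, A i j = -1 ∨ A i j = 0 ∨ A i j = 1) ∧
  (∀ i, ∑ j, A i j = 1) ∧
  (∀ j, ∑ i, A i j = 1) ∧
  (∀ i j, (∑ j' ∈ Finset.Iic j, A i j') = 0 ∨ (∑ j' ∈ Finset.Iic j, A i j') = 1) ∧
  (∀ i j, (∑ i' ∈ Finset.Iic i, A i' j) = 0 ∨ (∑ i' ∈ Finset.Iic i, A i' j) = 1)

open scoped Classical in
/-- The (finite) set of all alternating sign matrices of size n; since every ASM has entries
in {-1,0,1}, it occurs in the image below. -/
noncomputable def asmFinset (n : ℕ) : Finset (Matrix (Fin n) (Fin n) ℤ) :=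
  ((Finset.univ : Finset (Matrix (Fin n) (Fin n) (Fin 3))).image
    (fun B => Matrix.of fun i j => ((B i j : ℕ) : ℤ) - 1)).filter (fun A => IsASM A)

/-- μ(A): the number of entries of A equal to -1. -/
def asmMu {n : ℕ} (A : Matrix (Fin n) (Fin n) ℤ) : ℕ :=
  (Finset.univ.filter (fun p : Fin n × Fin n => A p.1 p.2 = -1)).card

/-- The Q-enumeration A_n(Q) = ∑_A Q^{μ(A)} of alternating sign matrices of size n. -/
noncomputable def asmEnum {S : Type*} [CommRing S] (n : ℕ) (Q : S) : S :=
  ∑ A ∈ asmFinset n, Q ^ asmMu A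

section Operators
variable {R : Type*} [CommRing R]

/-- The first of the two weights of the vertices of the six-vertex model with aligned edges. -/
def vertexA (u v : R) : R := 1 - u - v

/-- The second of the two weights of the vertices of the six-vertex model with aligned edges. -/
def vertexB (q p u v : R) : R := 1 + p * u + q * v

/-- The product of the two turning weights of the six-vertex model. -/
def vertexC (q p u v : R) : R := (1 + p) ^ 2 * (q - (q - 1) * u) * (1 + (q - 1) * v)

/-- The transfer operator of one row with spectral parameter `u` and incoming horizontal edge given
by the Boolean argument; the outgoing horizontal edge is always `true`. -/
def rowOp (q p u : R) : {n : ℕ} → (Fin n → R) → Bool → ((Fin n → Bool) → R) → (Fin n → Bool) → R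
  | 0, _, r, φ, s => if r then φ s else 0
  | _ + 1, v, r, φ, s =>
    match r, s 0 with
    | false, false => vertexA u (v 0) * rowOp q p u (Fin.tail v) false
          (fun t => φ (Fin.cons false t)) (Fin.tail s) +
        rowOp q p u (Fin.tail v) true (fun t => φ (Fin.cons true t)) (Fin.tail s)
    | false, true => vertexB q p u (v 0) * rowOp q p u (Fin.tail v) false
          (fun t => φ (Fin.cons true t)) (Fin.tail s)
    | true, false => vertexB q p u (v 0) * rowOp q p u (Fin.tail v) true
          (fun t => φ (Fin.cons false t)) (Fin.tail s)
    | true, true => vertexA u (v 0) * rowOp q p u (Fin.tail v) true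
          (fun t => φ (Fin.cons true t)) (Fin.tail s) +
        vertexC q p u (v 0) * rowOp q p u (Fin.tail v) false
          (fun t => φ (Fin.cons false t)) (Fin.tail s)

variable (q p u : R) {n : ℕ}

theorem rowOp_false_cons_false (v : Fin (n + 1) → R) (φ : (Fin (n + 1) → Bool) → R)
    (t : Fin n → Bool) : rowOp q p u v false φ (Fin.cons false t) =
      vertexA u (v 0) * rowOp q p u (Fin.tail v) false (fun t => φ (Fin.cons false t)) t +
        rowOp q p u (Fin.tail v) true (fun t => φ (Fin.cons true t)) t := rfl

theorem rowOp_false_cons_true (v : Fin (n + 1) → R) (φ : (Fin (n + 1) → Bool) → R)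
    (t : Fin n → Bool) : rowOp q p u v false φ (Fin.cons true t) =
      vertexB q p u (v 0) * rowOp q p u (Fin.tail v) false (fun t => φ (Fin.cons true t)) t := rfl

theorem rowOp_true_cons_false (v : Fin (n + 1) → R) (φ : (Fin (n + 1) → Bool) → R)
    (t : Fin n → Bool) : rowOp q p u v true φ (Fin.cons false t) =
      vertexB q p u (v 0) * rowOp q p u (Fin.tail v) true (fun t => φ (Fin.cons false t)) t := rfl

theorem rowOp_true_cons_true (v : Fin (n + 1) → R) (φ : (Fin (n + 1) → Bool) → R)
    (t : Fin n → Bool) : rowOp q p u v true φ (Fin.cons true t) =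
      vertexA u (v 0) * rowOp q p u (Fin.tail v) true (fun t => φ (Fin.cons true t)) t +
        vertexC q p u (v 0) * rowOp q p u (Fin.tail v) false (fun t => φ (Fin.cons false t)) t :=
  rfl

theorem rowOp_add (v : Fin n → R) (r : Bool) (φ ψ : (Fin n → Bool) → R) (s : Fin n → Bool) :
    rowOp q p u v r (fun t => φ t + ψ t) s = rowOp q p u v r φ s + rowOp q p u v r ψ s := by
  induction n generalizing r with
  | zero => cases r <;> simp [rowOp]
  | succ n ih =>
    obtain ⟨x, t, rfl⟩ : ∃ x t, s = Fin.cons x t := ⟨s 0, Fin.tail s, (Fin.cons_self_tail s).symm⟩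
    cases r <;> cases x <;>
      simp only [rowOp_false_cons_false, rowOp_false_cons_true, rowOp_true_cons_false,
        rowOp_true_cons_true, ih] <;> ring

theorem rowOp_mul (v : Fin n → R) (r : Bool) (c : R) (φ : (Fin n → Bool) → R) (s : Fin n → Bool) :
    rowOp q p u v r (fun t => c * φ t) s = c * rowOp q p u v r φ s := by
  induction n generalizing r with
  | zero => cases r <;> simp [rowOp]
  | succ n ih =>
    obtain ⟨x, t, rfl⟩ : ∃ x t, s = Fin.cons x t := ⟨s 0, Fin.tail s, (Fin.cons_self_tail s).symm⟩
    cases r <;> cases x <;>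
      simp only [rowOp_false_cons_false, rowOp_false_cons_true, rowOp_true_cons_false,
        rowOp_true_cons_true, ih] <;> ring

theorem vertex_exchange [IsDomain R] (hqp : q * p = 1) {u u' : R} (v BD B₂D DB₂ D₂B : R)
    (hne : u ≠ u')
    (e : (u - u') * (q * B₂D + DB₂) = (1 + p) * (q - (q - 1) * u) * (BD - B₂D))
    (e' : (u' - u) * (q * BD + D₂B) = (1 + p) * (q - (q - 1) * u') * (B₂D - BD)) :
    vertexA u v * BD + vertexB q p u' v * DB₂ =
      vertexA u' v * B₂D + vertexB q p u v * D₂B ∧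
    vertexC q p u v * vertexB q p u' v * BD + vertexA u v * vertexC q p u' v * DB₂ =
      vertexC q p u' v * vertexB q p u v * B₂D + vertexA u' v * vertexC q p u v * D₂B ∧
    (u - u') * (q * (vertexA u' v * vertexB q p u v * B₂D + vertexC q p u v * D₂B) +
        vertexB q p u v * vertexA u' v * DB₂) =
      (1 + p) * (q - (q - 1) * u) * (vertexA u v * vertexB q p u' v * BD +
        vertexC q p u' v * DB₂ - vertexA u' v * vertexB q p u v * B₂D - vertexC q p u v * D₂B) ∧
    (u - u') * (q * vertexB q p u' v * vertexA u v * B₂D + vertexC q p u v * BD +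
        vertexA u v * vertexB q p u' v * DB₂) =
      (1 + p) * (q - (q - 1) * u) * (vertexB q p u v * vertexA u' v * BD -
        vertexB q p u' v * vertexA u v * B₂D) ∧
    (u - u') * (q * vertexB q p u' v * vertexC q p u v + vertexC q p u v * vertexA u' v) =
      (1 + p) * (q - (q - 1) * u) * (vertexB q p u v * vertexC q p u' v -
        vertexB q p u' v * vertexC q p u v) ∧
    q * vertexA u v + vertexB q p u v = (1 + p) * (q - (q - 1) * u) := by
  have hδ : u - u' ≠ 0 := sub_ne_zero.mpr hne
  obtain ⟨x, hx⟩ : ∃ x, x = (1 + p) * (q - (q - 1) * u) := ⟨_, rfl⟩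
  obtain ⟨x', hx'⟩ : ∃ x', x' = (1 + p) * (q - (q - 1) * u') := ⟨_, rfl⟩
  obtain ⟨y, hy⟩ : ∃ y, y = (1 + p) * (1 + (q - 1) * v) := ⟨_, rfl⟩
  have hc : vertexC q p u v = x * y := by rw [vertexC, hx, hy]; ring
  have hc' : vertexC q p u' v = x' * y := by rw [vertexC, hx', hy]; ring
  rw [← hx] at e ⊢
  rw [← hx'] at e'
  rw [hc, hc']
  obtain ⟨a, ha⟩ : ∃ a, a = vertexA u v := ⟨_, rfl⟩
  obtain ⟨a', ha'⟩ : ∃ a, a = vertexA u' v := ⟨_, rfl⟩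
  obtain ⟨b, hb⟩ : ∃ b, b = vertexB q p u v := ⟨_, rfl⟩
  obtain ⟨b', hb'⟩ : ∃ b, b = vertexB q p u' v := ⟨_, rfl⟩
  rw [← ha, ← ha', ← hb, ← hb']
  rw [vertexA] at ha ha'
  rw [vertexB] at hb hb'
  have hxab : x = q * a + b := by rw [hx, ha, hb]; linear_combination (1 - u) * hqp
  have hxab' : x' = q * a' + b' := by rw [hx', ha', hb']; linear_combination (1 - u') * hqp
  have hyab : q * y = a + q * b := by
    rw [hy, ha, hb]; linear_combination (1 - u - v + q * v) * hqp
  have hyab' : q * y = a' + q * b' := by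
    rw [hy, ha', hb']; linear_combination (1 - u' - v + q * v) * hqp
  have hda : a' - a = u - u' := by rw [ha, ha']; ring
  have hcross : a' * b - a * b' = (u - u') * y := by
    rw [hy, ha, ha', hb, hb']; linear_combination -(u - u') * v * hqp
  have hbx : b * x' - b' * x = q * (u - u') * y := by
    rw [hxab, hxab']; linear_combination q * hcross
  have hdx : x' - x = (u - u') * (q - p) := by
    rw [hx, hx']; linear_combination (u - u') * hqp
  refine ⟨?_, ?_, ?_, ?_, ?_, hxab.symm⟩
  · apply mul_left_cancel₀ hδ
    linear_combination b' * e + b * e' - BD * ((u - u') * hyab + hbx) +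
      B₂D * ((u - u') * hyab' + hbx)
  · apply mul_left_cancel₀ hδ
    linear_combination a * x' * y * e + a' * x * y * e' - BD * x * y * (u - u') * hxab' +
      B₂D * (u - u') * x' * y * hxab + (B₂D - BD) * x * x' * y * hda
  · apply mul_left_cancel₀ hδ
    linear_combination ((u - u') * b * a' - x * x' * y) * e -
      ((u - u') * q * x * y + x * x * y) * e' + BD * (u - u') * x * hcross +
      BD * (u - u') * q * x * y * hdx - BD * (u - u') ^ 2 * x * y * hqp
  · linear_combination a * b' * e - BD * x * hcross
  · linear_combination - x * y * ((u - u') * hyab' + hbx)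

theorem rowOp_exchange [IsDomain R] (hqp : q * p = 1) (u u' : R) (v : Fin n → R)
    (φ : (Fin n → Bool) → R) (s : Fin n → Bool) :
    rowOp q p u v false (rowOp q p u' v false φ) s =
      rowOp q p u' v false (rowOp q p u v false φ) s ∧
    rowOp q p u v true (rowOp q p u' v true φ) s =
      rowOp q p u' v true (rowOp q p u v true φ) s ∧
    (u - u') * (q * rowOp q p u' v false (rowOp q p u v true φ) s +
        rowOp q p u v true (rowOp q p u' v false φ) s) =
      (1 + p) * (q - (q - 1) * u) * (rowOp q p u v false (rowOp q p u' v true φ) s -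
        rowOp q p u' v false (rowOp q p u v true φ) s) := by
  rcases eq_or_ne u u' with rfl | hne
  · simp
  have hδ : u - u' ≠ 0 := sub_ne_zero.mpr hne
  induction n generalizing u u' with
  | zero => simp [rowOp]
  | succ n ih =>
    obtain ⟨x, t, rfl⟩ : ∃ x t, s = Fin.cons x t := ⟨s 0, Fin.tail s, (Fin.cons_self_tail s).symm⟩
    have hδ' : u' - u ≠ 0 := sub_ne_zero.mpr hne.symm
    have h := fun φ => ih u u' (Fin.tail v) φ t hne hδ
    have h' := fun φ => (ih u' u (Fin.tail v) φ t hne.symm hδ').2.2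
    obtain ⟨bb0, dd0, e0⟩ := h (fun t => φ (Fin.cons false t))
    obtain ⟨bb1, dd1, e1⟩ := h (fun t => φ (Fin.cons true t))
    have f0 := h' (fun t => φ (Fin.cons false t))
    have f1 := h' (fun t => φ (Fin.cons true t))
    obtain ⟨-, g2, g3, -, g5, -⟩ := vertex_exchange q p hqp (v 0) _ _ _ _ hne e0 f0
    obtain ⟨h1, -, -, h4, -, hx⟩ := vertex_exchange q p hqp (v 0) _ _ _ _ hne e1 f1
    have hda : vertexA u' (v 0) - vertexA u (v 0) = u - u' := by rw [vertexA, vertexA]; ring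
    cases x <;> refine ⟨?_, ?_, ?_⟩ <;>
      simp only [rowOp_false_cons_false, rowOp_false_cons_true, rowOp_true_cons_false,
        rowOp_true_cons_true, rowOp_add, rowOp_mul, bb0, bb1, dd0, dd1]
    · linear_combination h1
    · ring
    · linear_combination g3 + rowOp q p u' (Fin.tail v) true (rowOp q p u (Fin.tail v) true
        fun t => φ (Fin.cons true t)) t * ((u - u') * hx - (1 + p) * (q - (q - 1) * u) * hda)
    · ring
    · linear_combination g2
    · linear_combination h4 + rowOp q p u' (Fin.tail v) false (rowOp q p u (Fin.tail v) false
        fun t => φ (Fin.cons false t)) t * g5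

end Operators

section Partition
variable {R : Type*} [CommRing R] (q p : R) {n : ℕ}

/-- The weight of `k` consecutive rows with top edges `s` and all bottom edges `true`. -/
def iterOp (v : Fin n → R) : (k : ℕ) → (Fin k → R) → (Fin n → Bool) → R
  | 0, _ => fun s => if s = fun _ => true then 1 else 0
  | k + 1, u => rowOp q p (u 0) v false (iterOp v k (Fin.tail u))

theorem iterOp_eq_rowOp_succAbove [IsDomain R] (hqp : q * p = 1) (v : Fin n → R) {k : ℕ}
    (u : Fin (k + 1) → R) (i : Fin (k + 1)) :
    iterOp q p v (k + 1) u =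
      rowOp q p (u i) v false (iterOp q p v k fun j => u (i.succAbove j)) := by
  induction k with
  | zero =>
    obtain rfl : i = 0 := Fin.fin_one_eq_zero i
    rfl
  | succ k ih =>
    refine Fin.cases rfl (fun j => ?_) i
    rw [iterOp, ih (Fin.tail u) j]
    funext s
    rw [show rowOp q p (u 0) v false (rowOp q p (Fin.tail u j) v false _) s = _ from
      (rowOp_exchange q p hqp (u 0) (Fin.tail u j) v _ s).1]
    simp only [iterOp, Fin.succ_succAbove_zero]
    congr 3
    funext m
    simp only [Fin.tail, Fin.succ_succAbove_succ]

theorem iterOp_cons_true (v : Fin (n + 1) → R) {k : ℕ} (u : Fin k → R) (t : Fin n → Bool) :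
    iterOp q p v k u (Fin.cons true t) =
      (∏ i, vertexB q p (u i) (v 0)) * iterOp q p (Fin.tail v) k u t := by
  induction k generalizing t with
  | zero =>
    have : (Fin.cons true t : Fin (n + 1) → Bool) = (fun _ => true) ↔ t = fun _ => true := by
      simp [funext_iff, Fin.forall_fin_succ]
    simp [iterOp, this]
  | succ k ih =>
    simp only [iterOp, rowOp_false_cons_true, ih, rowOp_mul, Fin.prod_univ_succ]
    simp only [Fin.tail]
    ring

theorem rowOp_true_apply_false (u : R) (v : Fin n → R) (φ : (Fin n → Bool) → R) :
    rowOp q p u v true φ (fun _ => false) = (∏ j, vertexB q p u (v j)) * φ fun _ => false := by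
  induction n with
  | zero => simp [rowOp]
  | succ n ih =>
    have h : (fun _ => false : Fin (n + 1) → Bool) = Fin.cons false fun _ => false := by
      funext i; refine Fin.cases rfl (fun _ => rfl) i
    rw [h, rowOp_true_cons_false, ih, Fin.prod_univ_succ]
    simp only [Fin.tail]
    ring

/-- The domain wall partition function of the six-vertex model. -/
def partitionFn (u v : Fin n → R) : R := iterOp q p v n u fun _ => false

theorem partitionFn_eq_of_vertexA_eq_zero [IsDomain R] (hqp : q * p = 1)
    (u v : Fin (n + 1) → R) (i : Fin (n + 1)) (h : vertexA (u i) (v 0) = 0) :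
    partitionFn q p u v = (∏ j, vertexB q p (u i) (Fin.tail v j)) *
      (∏ k, vertexB q p (u (i.succAbove k)) (v 0)) *
        partitionFn q p (fun k => u (i.succAbove k)) (Fin.tail v) := by
  have h0 : (fun _ => false : Fin (n + 1) → Bool) = Fin.cons false fun _ => false := by
    funext i; refine Fin.cases rfl (fun _ => rfl) i
  rw [partitionFn, iterOp_eq_rowOp_succAbove q p hqp v u i, h0, rowOp_false_cons_false, h,
    zero_mul, zero_add, rowOp_true_apply_false, iterOp_cons_true, partitionFn, mul_assoc]

theorem rowOp_map {S : Type*} [CommRing S] (f : R →+* S) (u : R) (v : Fin n → R) (r : Bool)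
    (φ : (Fin n → Bool) → R) (s : Fin n → Bool) :
    f (rowOp q p u v r φ s) = rowOp (f q) (f p) (f u) (fun j => f (v j)) r (fun t => f (φ t)) s := by
  induction n generalizing r with
  | zero => cases r <;> simp [rowOp]
  | succ n ih =>
    obtain ⟨x, t, rfl⟩ : ∃ x t, s = Fin.cons x t := ⟨s 0, Fin.tail s, (Fin.cons_self_tail s).symm⟩
    cases r <;> cases x <;>
      simp [rowOp_false_cons_false, rowOp_false_cons_true, rowOp_true_cons_false,
        rowOp_true_cons_true, ih, vertexA, vertexB, vertexC] <;> rfl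

theorem iterOp_map {S : Type*} [CommRing S] (f : R →+* S) (v : Fin n → R) {k : ℕ} (u : Fin k → R)
    (s : Fin n → Bool) :
    f (iterOp q p v k u s) = iterOp (f q) (f p) (fun j => f (v j)) k (fun i => f (u i)) s := by
  induction k generalizing s with
  | zero => simp only [iterOp]; split_ifs <;> simp
  | succ k ih => simp only [iterOp, rowOp_map, ih]; rfl

end Partition

section PolynomialFunctions
open Polynomial
variable {R : Type*} [CommRing R]

/-- The functions given by polynomials of degree less than `d`. -/
def polyFun (R : Type*) [CommRing R] (d : ℕ) : Submodule R (R → R) :=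
  (degreeLT R d).map (LinearMap.pi fun y => leval y)

theorem mem_polyFun {d : ℕ} {f : R → R} :
    f ∈ polyFun R d ↔ ∃ P : R[X], P.degree < d ∧ ∀ y, P.eval y = f y := by
  simp [polyFun, Submodule.mem_map, mem_degreeLT, funext_iff, leval]

theorem const_mem_polyFun (c : R) : (fun _ => c) ∈ polyFun R 1 :=
  mem_polyFun.mpr ⟨C c, (degree_C_le).trans_lt (by simp), fun _ => eval_C⟩

theorem affine_mul_mem_polyFun {d : ℕ} {f : R → R} (hf : f ∈ polyFun R d) (b c : R) :
    (fun y => (b + c * y) * f y) ∈ polyFun R (d + 1) := by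
  obtain ⟨P, hP, h⟩ := mem_polyFun.mp hf
  rcases eq_or_ne P 0 with rfl | hP0
  · refine mem_polyFun.mpr ⟨0, by simp, fun y => ?_⟩
    simp [← h y]
  refine mem_polyFun.mpr ⟨(C b + C c * X) * P, ?_, fun y => by simp [h]⟩
  have h1 : (C b + C c * X : R[X]).natDegree ≤ 1 := by
    rw [add_comm]; exact natDegree_linear_le
  have h2 : P.natDegree < d := (natDegree_lt_iff_degree_lt hP0).mpr hP
  refine (degree_le_natDegree).trans_lt ?_
  have := natDegree_mul_le (p := (C b + C c * X : R[X])) (q := P)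
  exact_mod_cast (by omega : ((C b + C c * X) * P).natDegree < d + 1)

theorem prod_affine_mul_mem_polyFun {d m : ℕ} {f : R → R} (hf : f ∈ polyFun R d)
    (b c : Fin m → R) : (fun y => (∏ i, (b i + c i * y)) * f y) ∈ polyFun R (d + m) := by
  induction m with
  | zero => simpa using hf
  | succ m ih =>
    simp only [Fin.prod_univ_succ, mul_assoc]
    exact affine_mul_mem_polyFun (ih (fun i => b i.succ) (fun i => c i.succ)) (b 0) (c 0)

theorem eq_zero_of_mem_polyFun [IsDomain R] {d : ℕ} {f : R → R} (hf : f ∈ polyFun R d)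
    {ι : Type*} [Fintype ι] (hι : Fintype.card ι = d) (x : ι → R) (hx : Function.Injective x)
    (h : ∀ i, f (x i) = 0) : f = 0 := by
  obtain ⟨P, hP, he⟩ := mem_polyFun.mp hf
  have : P = 0 := by
    refine eq_zero_of_degree_lt_of_eval_finset_eq_zero (univ.map ⟨x, hx⟩) ?_ ?_
    · simpa [hι] using hP
    · simp [he, h]
  funext y
  simp [← he y, this]

theorem rowOp_mem_polyFun (q p u : R) {n d : ℕ} (v : Fin n → R) (r : Bool)
    (φ : R → (Fin n → Bool) → R) (hφ : ∀ t, (fun y => φ y t) ∈ polyFun R d) (s : Fin n → Bool) :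
    (fun y => rowOp q p u v r (φ y) s) ∈ polyFun R d := by
  induction n generalizing r with
  | zero =>
    cases r
    · exact (polyFun R d).zero_mem
    · simpa [rowOp] using hφ s
  | succ n ih =>
    obtain ⟨x, t, rfl⟩ : ∃ x t, s = Fin.cons x t := ⟨s 0, Fin.tail s, (Fin.cons_self_tail s).symm⟩
    have h := fun r x => ih (Fin.tail v) r (fun y t => φ y (Fin.cons x t)) (fun t => hφ _) t
    cases r <;> cases x <;>
      simp only [rowOp_false_cons_false, rowOp_false_cons_true, rowOp_true_cons_false,
        rowOp_true_cons_true]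
    · exact (polyFun R d).add_mem ((polyFun R d).smul_mem _ (h _ _)) (h _ _)
    · exact (polyFun R d).smul_mem _ (h _ _)
    · exact (polyFun R d).smul_mem _ (h _ _)
    · exact (polyFun R d).add_mem ((polyFun R d).smul_mem _ (h _ _))
        ((polyFun R d).smul_mem _ (h _ _))

theorem iterOp_cons_false_mem_polyFun (q p : R) {n k : ℕ} (w : Fin n → R) (u : Fin k → R)
    (t : Fin n → Bool) :
    (fun y => iterOp q p (Fin.cons y w : Fin (n + 1) → R) k u (Fin.cons false t)) ∈
      polyFun R k := by
  induction k generalizing t with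
  | zero =>
    have : (Fin.cons false t : Fin (n + 1) → Bool) ≠ (fun _ => true) := fun h => by
      simpa using congrFun h 0
    simp only [iterOp, if_neg this]
    exact (polyFun R 0).zero_mem
  | succ k ih =>
    simp only [iterOp, rowOp_false_cons_false, Fin.cons_zero, Fin.tail_cons, iterOp_cons_true,
      rowOp_mul]
    refine (polyFun R _).add_mem ?_ ?_
    · convert affine_mul_mem_polyFun (rowOp_mem_polyFun q p (u 0) w false _
        (fun t => ih (Fin.tail u) t) t) (1 - u 0) (-1) using 3
      rw [vertexA]; ring
    · have h := prod_affine_mul_mem_polyFun (const_mem_polyFun (rowOp q p (u 0) w true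
        (iterOp q p w k (Fin.tail u)) t)) (fun i => 1 + p * Fin.tail u i) (fun _ => q)
      rw [add_comm 1 k] at h
      exact h

end PolynomialFunctions

section Izergin
open Matrix
variable {R : Type*} [CommRing R] {n : ℕ}

theorem det_vandermonde_succ (v : Fin (n + 1) → R) :
    (vandermonde v).det = (∏ j, (Fin.tail v j - v 0)) * (vandermonde (Fin.tail v)).det := by
  rw [det_vandermonde, det_vandermonde, Fin.prod_univ_succ, Fin.prod_Ioi_zero]
  simp only [Fin.prod_Ioi_succ]
  rfl

theorem det_vandermonde_succAbove (u : Fin (n + 1) → R) (i : Fin (n + 1)) :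
    (vandermonde u).det = (-1) ^ (i : ℕ) * (∏ k, (u (i.succAbove k) - u i)) *
      (vandermonde fun k => u (i.succAbove k)).det := by
  have h := det_permute i.cycleRange.symm (vandermonde u)
  have h2 : (vandermonde u).submatrix i.cycleRange.symm id =
      vandermonde (fun k => u (i.cycleRange.symm k)) := rfl
  rw [h2, det_vandermonde_succ] at h
  simp only [Fin.tail, Fin.cycleRange_symm_succ, Fin.cycleRange_symm_zero, Equiv.Perm.sign_symm,
    Fin.sign_cycleRange] at h
  have h3 : (Fin.tail fun k => u (i.cycleRange.symm k)) = fun k => u (i.succAbove k) := by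
    funext k; simp [Fin.tail]
  rw [h3] at h
  rw [mul_assoc, h, ← mul_assoc]
  push_cast
  rw [← mul_pow]
  simp

theorem partitionFn_mul_vandermonde [IsDomain R] (q p : R) (hqp : q * p = 1) (u v : Fin n → R)
    (hu : Function.Injective u) (hv : Function.Injective v) (M : Matrix (Fin n) (Fin n) R)
    (hM : ∀ i j, M i j * (vertexA (u i) (v j) * vertexB q p (u i) (v j)) = 1) :
    partitionFn q p u v * ((vandermonde u).det * (vandermonde v).det) =
      (∏ i, ∏ j, vertexA (u i) (v j) * vertexB q p (u i) (v j)) * M.det := by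
  induction n with
  | zero => simp [partitionFn, iterOp, funext_iff]
  | succ n ih =>
    obtain ⟨y₀, w, rfl⟩ : ∃ y w, v = Fin.cons y w := ⟨v 0, Fin.tail v, (Fin.cons_self_tail v).symm⟩
    have hw : Function.Injective w := fun i j h => by
      have : (Fin.cons y₀ w : Fin (n + 1) → R) i.succ =
          (Fin.cons y₀ w : Fin (n + 1) → R) j.succ := by simpa using h
      exact Fin.succ_injective _ (hv this)
    have hM' : ∀ i j, M i (Fin.succ j) * (vertexA (u i) (w j) * vertexB q p (u i) (w j)) = 1 :=
      fun i j => by simpa using hM i j.succ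
    have hM0 : ∀ i, M i 0 * (vertexA (u i) y₀ * vertexB q p (u i) y₀) = 1 :=
      fun i => by simpa using hM i 0
    obtain ⟨minor, hminor⟩ : ∃ m : Fin (n + 1) → R,
        m = fun i => (M.submatrix i.succAbove Fin.succ).det := ⟨_, rfl⟩
    obtain ⟨T, hT⟩ : ∃ T, T = ∏ i, ∏ j, vertexA (u i) (w j) * vertexB q p (u i) (w j) := ⟨_, rfl⟩
    have hIH : ∀ i : Fin (n + 1), partitionFn q p (fun k => u (i.succAbove k)) w *
        ((vandermonde fun k => u (i.succAbove k)).det * (vandermonde w).det) *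
        (∏ j, vertexA (u i) (w j) * vertexB q p (u i) (w j)) = T * minor i := by
      intro i
      rw [hT, hminor, Fin.prod_univ_succAbove _ i,
        ih (fun k => u (i.succAbove k)) w (hu.comp Fin.succAbove_right_injective) hw
        (M.submatrix i.succAbove Fin.succ) (fun k j => hM' _ _)]
      ring
    obtain ⟨f, hf⟩ : ∃ f : R → R, f = fun y =>
        (vandermonde u).det * (vandermonde w).det *
          ((∏ j, (w j + (-1) * y)) * partitionFn q p u (Fin.cons y w : Fin (n + 1) → R)) -
        ∑ i : Fin (n + 1), T * (-1) ^ (i : ℕ) * minor i *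
          ((∏ k, (1 - u (i.succAbove k) + (-1) * y)) *
            ((∏ k, (1 + p * u (i.succAbove k) + q * y)) * 1)) := ⟨_, rfl⟩
    have hfmem : f ∈ polyFun R (n + 1 + n) := by
      rw [hf]
      refine (polyFun R _).sub_mem ((polyFun R _).smul_mem _
        (prod_affine_mul_mem_polyFun ?_ _ _)) ?_
      · have h0 : (fun _ => false : Fin (n + 1) → Bool) = Fin.cons false fun _ => false := by
          funext i; refine Fin.cases rfl (fun _ => rfl) i
        simp only [partitionFn, h0]
        exact iterOp_cons_false_mem_polyFun q p w u _
      · convert (polyFun R (n + 1 + n)).sum_mem (t := univ) (f := fun (i : Fin (n + 1)) y =>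
          T * (-1) ^ (i : ℕ) * minor i * ((∏ k, (1 - u (i.succAbove k) + (-1) * y)) *
            ((∏ k, (1 + p * u (i.succAbove k) + q * y)) * 1))) (fun i _ => ?_) using 1
        · funext y; simp
        · refine (polyFun R _).smul_mem _ (prod_affine_mul_mem_polyFun ?_ _ _)
          rw [add_comm n 1]
          exact prod_affine_mul_mem_polyFun (const_mem_polyFun 1) _ _
    have hdet : ∀ y (m : Fin (n + 1) → R),
        (∀ i, m i * (vertexA (u i) y * vertexB q p (u i) y) = 1) →
        ∑ i : Fin (n + 1), T * (-1) ^ (i : ℕ) * minor i *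
          ((∏ k, (1 - u (i.succAbove k) + (-1) * y)) *
            ((∏ k, (1 + p * u (i.succAbove k) + q * y)) * 1)) =
        T * (∏ i, vertexA (u i) y * vertexB q p (u i) y) *
          ∑ i : Fin (n + 1), (-1) ^ (i : ℕ) * m i * minor i := by
      intro y m hm
      rw [mul_sum]
      refine sum_congr rfl fun i _ => ?_
      rw [Fin.prod_univ_succAbove _ i, mul_one, ← prod_mul_distrib]
      have : ∏ k, ((1 - u (i.succAbove k) + (-1) * y) * (1 + p * u (i.succAbove k) + q * y)) =
          ∏ k, vertexA (u (i.succAbove k)) y * vertexB q p (u (i.succAbove k)) y :=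
        prod_congr rfl fun k _ => by rw [vertexA, vertexB]; ring
      rw [this]
      linear_combination -T * (-1) ^ (i : ℕ) * minor i *
        (∏ k, vertexA (u (i.succAbove k)) y * vertexB q p (u (i.succAbove k)) y) * hm i
    have hzero : f = 0 := by
      refine eq_zero_of_mem_polyFun hfmem (ι := Fin (n + 1) ⊕ Fin n) (by simp)
        (Sum.elim (fun i => 1 - u i) w) ?_ ?_
      · refine Function.Injective.sumElim (fun i j h => hu ?_) hw fun i j h => ?_
        · linear_combination -h
        · have := hM' i j
          rw [vertexA, ← h] at this
          simp at this
      · rintro (i | j)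
        · simp only [Sum.elim_inl, hf]
          rw [partitionFn_eq_of_vertexA_eq_zero q p hqp u _ i (by simp [vertexA]),
            sum_eq_single i, det_vandermonde_succAbove u i]
          · simp only [Fin.cons_zero, Fin.tail_cons, mul_one]
            have hi := hIH i
            rw [prod_mul_distrib] at hi
            have h1 : ∏ k, (1 - u (i.succAbove k) + (-1) * (1 - u i)) =
                (-1) ^ n * ∏ k, (u (i.succAbove k) - u i) := by
              rw [← Fin.prod_const, ← prod_mul_distrib]
              exact prod_congr rfl fun k _ => by ring
            have h2 : ∏ j, (w j + (-1) * (1 - u i)) = (-1) ^ n * ∏ j, vertexA (u i) (w j) := by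
              rw [← Fin.prod_const, ← prod_mul_distrib]
              exact prod_congr rfl fun k _ => by rw [vertexA]; ring
            have h3 : ∏ k, (1 + p * u (i.succAbove k) + q * (1 - u i)) =
              ∏ k, vertexB q p (u (i.succAbove k)) (1 - u i) := rfl
            rw [h1, h2, h3]
            linear_combination (-1) ^ n * (-1) ^ (i : ℕ) * (∏ k, (u (i.succAbove k) - u i)) *
              (∏ k, vertexB q p (u (i.succAbove k)) (1 - u i)) * hi
          · intro j _ hj
            obtain ⟨k, hk⟩ := Fin.exists_succAbove_eq hj.symm
            rw [prod_eq_zero (mem_univ k) (by rw [hk]; ring)]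
            simp
          · simp
        · simp only [Sum.elim_inr, hf]
          rw [hdet (w j) (fun i => M i j.succ) (fun i => hM' i j),
            prod_eq_zero (mem_univ j) (by ring)]
          have : ∑ i : Fin (n + 1), (-1) ^ (i : ℕ) * M i j.succ * minor i = 0 := by
            have h := det_succ_column_zero (M.updateCol 0 fun i => M i j.succ)
            rw [det_zero_of_column_eq (Fin.succ_ne_zero j).symm (by simp)] at h
            rw [h]
            refine sum_congr rfl fun i _ => ?_
            rw [hminor, updateCol_self]
            congr 2
          rw [this]
          ring
    have hy := congrFun hzero y₀
    rw [hf] at hy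
    simp only [hdet y₀ (fun i => M i 0) hM0, Pi.zero_apply] at hy
    have hMdet : M.det = ∑ i : Fin (n + 1), (-1) ^ (i : ℕ) * M i 0 * minor i := by
      rw [det_succ_column_zero, hminor]
    rw [det_vandermonde_succ (Fin.cons y₀ w : Fin (n + 1) → R), hMdet]
    have hprod : ∏ i, ∏ j, vertexA (u i) ((Fin.cons y₀ w : Fin (n + 1) → R) j) *
        vertexB q p (u i) ((Fin.cons y₀ w : Fin (n + 1) → R) j) =
        (∏ i, vertexA (u i) y₀ * vertexB q p (u i) y₀) * T := by
      rw [hT, ← prod_mul_distrib]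
      exact prod_congr rfl fun i _ => Fin.prod_univ_succ _
    have hneg : ∏ j, (w j + (-1) * y₀) = ∏ j, (w j - y₀) := prod_congr rfl fun j _ => by ring
    rw [hneg] at hy
    rw [hprod, Fin.tail_cons, Fin.cons_zero]
    linear_combination hy

end Izergin

section Homogeneous
open Matrix PowerSeries
variable {K : Type*} [Field K] {n : ℕ}

theorem exists_det_mk_eq (c : ℕ → ℕ → K) (α β : Fin n → K) (hα : Function.Injective α)
    (hβ : Function.Injective β) :
    ∃ G : Matrix (Fin n) (Fin n) K⟦X⟧,
      (of fun i j => PowerSeries.mk fun k =>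
        ∑ m ∈ antidiagonal k, c m.1 m.2 * α i ^ m.1 * β j ^ m.2).det =
        (C (vandermonde α).det * ∏ a : Fin n, X ^ (a : ℕ)) *
          (C (vandermonde β).det * ∏ b : Fin n, X ^ (b : ℕ)) * G.det ∧
      constantCoeff G.det = (of fun a b : Fin n => c a b).det := by
  have inv_apply : ∀ γ : Fin n → K, Function.Injective γ → ∀ (a : Fin n) (m : ℕ), m ≤ a →
      ∑ i, (vandermonde γ)⁻¹ a i * γ i ^ m = if m = a then 1 else 0 := by
    intro γ hγ a m hm
    have hdet : IsUnit (vandermonde γ).det := (det_vandermonde_ne_zero_iff.mpr hγ).isUnit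
    have h := congrFun (congrFun (nonsing_inv_mul _ hdet) a) ⟨m, hm.trans_lt a.2⟩
    simp only [mul_apply, vandermonde_apply, one_apply, Fin.ext_iff] at h
    rw [h]
    simp only [eq_comm]
  obtain ⟨F, hF⟩ : ∃ F : Matrix (Fin n) (Fin n) K⟦X⟧, F = of fun i j => PowerSeries.mk fun k =>
    ∑ m ∈ antidiagonal k, c m.1 m.2 * α i ^ m.1 * β j ^ m.2 := ⟨_, rfl⟩
  obtain ⟨H, hH⟩ : ∃ H : Matrix (Fin n) (Fin n) K⟦X⟧,
    H = (vandermonde α)⁻¹.map C * F * ((vandermonde β)⁻¹.map C)ᵀ := ⟨_, rfl⟩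
  have hcoeff : ∀ a b k, coeff k (H a b) = ∑ m ∈ antidiagonal k, c m.1 m.2 *
      (∑ i, (vandermonde α)⁻¹ a i * α i ^ m.1) * (∑ j, (vandermonde β)⁻¹ b j * β j ^ m.2) := by
    intro a b k
    simp only [hH, hF, mul_apply, map_apply, transpose_apply, of_apply, map_sum, sum_mul,
      coeff_mul_C, coeff_C_mul, coeff_mk, mul_sum]
    rw [sum_congr rfl fun j _ => sum_comm, sum_comm]
    refine sum_congr rfl fun m _ => ?_
    refine sum_congr rfl fun j _ => sum_congr rfl fun i _ => ?_
    ring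
  have hcoeff_le : ∀ (a b : Fin n) (k : ℕ), k ≤ a + b →
      coeff k (H a b) = if k = a + b then c a b else 0 := by
    intro a b k hk
    have hterm : ∀ m ∈ antidiagonal k, c m.1 m.2 *
        (∑ i, (vandermonde α)⁻¹ a i * α i ^ m.1) * (∑ j, (vandermonde β)⁻¹ b j * β j ^ m.2) =
        if m = ((a : ℕ), (b : ℕ)) then c a b else 0 := by
      rintro ⟨m₁, m₂⟩ hm
      rw [HasAntidiagonal.mem_antidiagonal] at hm
      simp only [Prod.mk.injEq]
      rcases lt_trichotomy m₁ a with h | rfl | h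
      · rw [inv_apply α hα a m₁ h.le, if_neg h.ne, if_neg (by omega)]
        simp
      · rw [inv_apply α hα a _ le_rfl, inv_apply β hβ b m₂ (by omega)]
        by_cases h2 : m₂ = b <;> simp [h2]
      · rw [inv_apply β hβ b m₂ (by omega), if_neg (by omega), if_neg (by omega), mul_zero]
    rw [hcoeff, sum_congr rfl hterm, sum_ite_eq']
    simp only [HasAntidiagonal.mem_antidiagonal, eq_comm]
  have hdvd : ∀ a b : Fin n, ∃ g, H a b = X ^ ((a : ℕ) + b) * g := fun a b =>
    X_pow_dvd_iff.mpr fun k hk => by rw [hcoeff_le a b k hk.le, if_neg hk.ne]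
  choose G hG using hdvd
  refine ⟨of G, ?_, ?_⟩
  · have h1 : H = of fun a b : Fin n => X ^ (a : ℕ) * (of fun a b : Fin n => X ^ (b : ℕ) * G a b) a b := by
      ext1 a b
      simp only [hG, of_apply, pow_add, mul_assoc]
    have h2 : H.det = (∏ a : Fin n, X ^ (a : ℕ)) * ((∏ a : Fin n, X ^ (a : ℕ)) * (of G).det) := by
      rw [h1, det_mul_column]
      exact congrArg _ (det_mul_row (fun b : Fin n => (X : K⟦X⟧) ^ (b : ℕ)) (of G))
    have h3 : C (vandermonde α).det * C (vandermonde β).det * H.det = F.det := by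
      have e : ∀ γ : Fin n → K, Function.Injective γ →
          C (vandermonde γ).det * ((vandermonde γ)⁻¹.map C).det = (1 : K⟦X⟧) := by
        intro γ hγ
        have hdet : IsUnit (vandermonde γ).det := (det_vandermonde_ne_zero_iff.mpr hγ).isUnit
        rw [← RingHom.mapMatrix_apply, ← RingHom.map_det, ← map_mul, ← det_mul,
          mul_nonsing_inv _ hdet, det_one, map_one]
      rw [hH, det_mul, det_mul, det_transpose]
      linear_combination F.det * C (vandermonde β).det * ((vandermonde β)⁻¹.map C).det * e α hα +
        F.det * e β hβ
    rw [← hF, ← h3, h2]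
    ring
  · rw [RingHom.map_det]
    congr 1
    ext a b
    have := hcoeff_le a b _ le_rfl
    rw [hG, if_pos rfl, coeff_X_pow_mul'] at this
    simpa using this

theorem mk_pow_mul_one_sub (x : K) : (PowerSeries.mk fun k => x ^ k) * (1 - C x * X) = 1 := by
  ext k
  rw [mul_sub, mul_one, ← mul_assoc, map_sub]
  cases k with
  | zero => simp
  | succ k => rw [coeff_succ_mul_X, coeff_mul_C, coeff_mk, coeff_mk, coeff_one]; simp [pow_succ]

/-- The entries of the determinant, indexed from `0`. -/
def latticeCoeff (q : K) (a b : ℕ) : K :=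
  ((a + b).choose b : K) * (1 - (-q) ^ ((b : ℤ) - (a : ℤ) + 1)) / (1 + q)

theorem mk_latticeCoeff_mul (q : K) (hq0 : q ≠ 0) (hq1 : 1 + q ≠ 0) (x y : K) :
    (PowerSeries.mk fun k => ∑ m ∈ antidiagonal k, latticeCoeff q m.1 m.2 * x ^ m.1 * y ^ m.2) *
      (vertexA (C x * X) (C y * X) * vertexB (C q) (C q⁻¹) (C x * X) (C y * X)) =
    1 + C ((q⁻¹ - 1) * x) * X := by
  have h1 : (PowerSeries.mk fun k => ∑ m ∈ antidiagonal k,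
      latticeCoeff q m.1 m.2 * x ^ m.1 * y ^ m.2) =
      C (1 + q)⁻¹ * ((PowerSeries.mk fun k => (x + y) ^ k) +
        C q * PowerSeries.mk fun k => (-q⁻¹ * x + -q * y) ^ k) := by
    ext k
    simp only [coeff_C_mul, coeff_mk, map_add]
    rw [(Commute.all x y).add_pow', (Commute.all (-q⁻¹ * x) (-q * y)).add_pow', mul_sum,
      ← sum_add_distrib, mul_sum]
    refine sum_congr rfl fun m hm => ?_
    have hq : -q ≠ 0 := neg_ne_zero.mpr hq0
    have hz : (-q) ^ ((m.2 : ℤ) - (m.1 : ℤ) + 1) = -q * (-q) ^ m.2 * (-q⁻¹) ^ m.1 := by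
      rw [zpow_add₀ hq, zpow_sub₀ hq, zpow_natCast, zpow_natCast, zpow_one, neg_inv, inv_pow]
      field_simp
    rw [latticeCoeff, hz, ← mem_antidiagonal.mp hm, ← Nat.choose_symm_add]
    simp only [nsmul_eq_mul, mul_pow]
    field_simp
    ring
  have h2 := mk_pow_mul_one_sub (x + y)
  have h3 := mk_pow_mul_one_sub (-q⁻¹ * x + -q * y)
  have h4 : C (1 + q)⁻¹ * (1 + C q) = (1 : K⟦X⟧) := by
    rw [← map_one C, ← map_add, ← map_mul, inv_mul_cancel₀ hq1]
  have h5 : C q * C q⁻¹ = (1 : K⟦X⟧) := by rw [← map_mul, mul_inv_cancel₀ hq0, map_one]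
  rw [h1, vertexA, vertexB]
  simp only [map_add, map_sub, map_mul, map_neg, map_one] at h2 h3 ⊢
  linear_combination C (1 + q)⁻¹ * (1 + C q⁻¹ * (C x * X) + C q * (C y * X)) * h2 +
    C (1 + q)⁻¹ * C q * (1 - C x * X - C y * X) * h3 + (1 + (C q⁻¹ - 1) * C x * X) * h4 -
    C (1 + q)⁻¹ * C x * X * h5

theorem det_vandermonde_C_mul_X (γ : Fin n → K) :
    (vandermonde fun i => C (γ i) * X).det =
      C (vandermonde γ).det * ∏ a : Fin n, (X : K⟦X⟧) ^ (a : ℕ) := by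
  have h : vandermonde (fun i => C (γ i) * X) =
      of fun i j : Fin n => (X : K⟦X⟧) ^ (j : ℕ) * C.mapMatrix (vandermonde γ) i j := by
    ext1 i j
    simp [vandermonde_apply, mul_pow, mul_comm]
  rw [h, det_mul_row, RingHom.map_det, mul_comm]

theorem partitionFn_zero [CharZero K] (q : K) (hq0 : q ≠ 0) (hq1 : 1 + q ≠ 0) :
    partitionFn q q⁻¹ (fun _ : Fin n => 0) (fun _ => 0) =
      (of fun a b : Fin n => latticeCoeff q a b).det := by
  obtain ⟨α, hα⟩ : ∃ α : Fin n → K, Function.Injective α :=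
    ⟨fun i => (i : ℕ), Nat.cast_injective.comp Fin.val_injective⟩
  obtain ⟨G, hdet, hG⟩ := exists_det_mk_eq (latticeCoeff q) α α hα hα
  obtain ⟨u, hu⟩ : ∃ u : Fin n → K⟦X⟧, u = fun i => C (α i) * X := ⟨_, rfl⟩
  have hinj : Function.Injective u := fun i j h => hα <| by
    have := congrArg (coeff 1) h
    simpa [hu] using this
  have hqp : C q * C q⁻¹ = (1 : K⟦X⟧) := by rw [← map_mul, mul_inv_cancel₀ hq0, map_one]
  have hcc : ∀ i j, constantCoeff (vertexA (u i) (u j) * vertexB (C q) (C q⁻¹) (u i) (u j)) = 1 := by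
    simp [hu, vertexA, vertexB]
  have hinv : ∀ i j, (vertexA (u i) (u j) * vertexB (C q) (C q⁻¹) (u i) (u j))⁻¹ *
      (vertexA (u i) (u j) * vertexB (C q) (C q⁻¹) (u i) (u j)) = 1 := fun i j =>
    PowerSeries.inv_mul_cancel _ (by rw [hcc]; exact one_ne_zero)
  have key := partitionFn_mul_vandermonde (C q) (C q⁻¹) hqp u u hinj hinj _ hinv
  have hF : (of fun i j => PowerSeries.mk fun k => ∑ m ∈ antidiagonal k,
      latticeCoeff q m.1 m.2 * α i ^ m.1 * α j ^ m.2) = of fun i j =>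
        (1 + C ((q⁻¹ - 1) * α i) * X) *
          (vertexA (u i) (u j) * vertexB (C q) (C q⁻¹) (u i) (u j))⁻¹ := by
    ext1 i j
    simp only [of_apply]
    rw [← mk_latticeCoeff_mul q hq0 hq1 (α i) (α j), mul_assoc]
    have := hinv i j
    rw [mul_comm] at this
    simp only [hu] at this ⊢
    rw [this, mul_one]
  rw [hF, det_mul_column (fun i => 1 + C ((q⁻¹ - 1) * α i) * X) fun i j =>
    (vertexA (u i) (u j) * vertexB (C q) (C q⁻¹) (u i) (u j))⁻¹] at hdet
  have hV : (vandermonde u).det = C (vandermonde α).det * ∏ a : Fin n, (X : K⟦X⟧) ^ (a : ℕ) := by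
    rw [hu, det_vandermonde_C_mul_X]
  rw [← hV] at hdet
  have hV0 : (vandermonde u).det * (vandermonde u).det ≠ 0 :=
    mul_self_ne_zero.mpr (det_vandermonde_ne_zero_iff.mpr hinj)
  have hfinal : partitionFn (C q) (C q⁻¹) u u * (∏ i, (1 + C ((q⁻¹ - 1) * α i) * X)) =
      (∏ i, ∏ j, vertexA (u i) (u j) * vertexB (C q) (C q⁻¹) (u i) (u j)) * G.det := by
    apply mul_left_cancel₀ hV0
    linear_combination (∏ i, (1 + C ((q⁻¹ - 1) * α i) * X)) * key +
      (∏ i, ∏ j, vertexA (u i) (u j) * vertexB (C q) (C q⁻¹) (u i) (u j)) * hdet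
  have := congrArg constantCoeff hfinal
  simp only [map_mul, map_prod, hG] at this
  simp only [← map_mul, hcc] at this
  rw [partitionFn, iterOp_map] at this
  simpa [hu, partitionFn] using this

end Homogeneous

section Enumeration
variable {R : Type*} [CommRing R]

theorem sum_Iic_succ_fin {M : Type*} [AddCommMonoid M] {n : ℕ} (f : Fin (n + 1) → M) (j : Fin n) :
    ∑ i ∈ Iic j.succ, f i = f 0 + ∑ i ∈ Iic j, f i.succ := by
  have h : Iic j.succ = insert 0 ((Iic j).map (Fin.succEmb n)) := by
    ext i
    refine Fin.cases (by simp) (fun k => ?_) i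
    simp
  rw [h, sum_insert (by simp), sum_map]
  rfl

theorem sum_Iic_succ_sub_castSucc {n : ℕ} (g : Fin (n + 1) → ℤ) (i : Fin n) :
    ∑ k ∈ Iic i, (g k.succ - g k.castSucc) = g i.succ - g 0 := by
  induction n with
  | zero => exact i.elim0
  | succ n ih =>
    refine Fin.cases ?_ (fun j => ?_) i
    · have : Iic (0 : Fin (n + 1)) = {0} := by ext; simp
      simp [this]
    · rw [sum_Iic_succ_fin]
      have := ih (fun k => g k.succ) j
      simp only [← Fin.succ_castSucc] at this ⊢
      rw [this]
      simp

theorem sum_succ_sub_castSucc {n : ℕ} (g : Fin (n + 1) → ℤ) :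
    ∑ k, (g (Fin.succ k) - g k.castSucc) = g (Fin.last n) - g 0 := by
  induction n with
  | zero => simp
  | succ n ih =>
    rw [Fin.sum_univ_succ]
    have := ih (fun k => g k.succ)
    simp only [← Fin.succ_castSucc] at this ⊢
    rw [this]
    simp

theorem eq_of_sum_Iic_eq {n : ℕ} {f g : Fin n → ℤ} (h : ∀ i, ∑ k ∈ Iic i, f k = ∑ k ∈ Iic i, g k) :
    f = g := by
  funext i
  induction i using WellFoundedLT.induction with
  | ind i ih =>
    have hi := h i
    rw [← Iio_insert, sum_insert (by simp), sum_insert (by simp),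
      sum_congr rfl fun k hk => ih k (mem_Iio.mp hk)] at hi
    exact add_right_cancel hi

/-- `s' - s`, preceded by the entry `r`, is an admissible row of an alternating sign matrix. -/
def RowValid {n : ℕ} (r : ℤ) (s s' : Fin n → Bool) : Prop :=
  (∀ j, r + ∑ k ∈ Iic j, ((s' k).toInt - (s k).toInt) = 0 ∨
    r + ∑ k ∈ Iic j, ((s' k).toInt - (s k).toInt) = 1) ∧
  r + ∑ k, ((s' k).toInt - (s k).toInt) = 1

open scoped Classical in
/-- The weight `Q ^ (number of negative entries)` of the row `s' - s`, or `0` if it is not admissible. -/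
def rowWeight (Q : R) {n : ℕ} (r : ℤ) (s s' : Fin n → Bool) : R :=
  if RowValid r s s' then ∏ j, (if (s' j).toInt - (s j).toInt = -1 then Q else 1) else 0

theorem rowValid_cons {n : ℕ} (r : ℤ) (x x' : Bool) (t t' : Fin n → Bool) :
    RowValid r (Fin.cons x t : Fin (n + 1) → Bool) (Fin.cons x' t' : Fin (n + 1) → Bool) ↔
      (r + (x'.toInt - x.toInt) = 0 ∨ r + (x'.toInt - x.toInt) = 1) ∧
        RowValid (r + (x'.toInt - x.toInt)) t t' := by
  have : Iic (0 : Fin (n + 1)) = {0} := by ext; simp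
  simp only [RowValid, Fin.forall_fin_succ, sum_Iic_succ_fin, this, sum_singleton, Fin.cons_zero,
    Fin.cons_succ, Fin.sum_univ_succ, add_assoc, and_assoc]

open scoped Classical in
theorem rowWeight_cons (Q : R) {n : ℕ} (r : ℤ) (x x' : Bool) (t t' : Fin n → Bool) :
    rowWeight Q r (Fin.cons x t : Fin (n + 1) → Bool) (Fin.cons x' t' : Fin (n + 1) → Bool) =
      if r + (x'.toInt - x.toInt) = 0 ∨ r + (x'.toInt - x.toInt) = 1 then
        (if x'.toInt - x.toInt = -1 then Q else 1) * rowWeight Q (r + (x'.toInt - x.toInt)) t t'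
      else 0 := by
  simp only [rowWeight, rowValid_cons, Fin.prod_univ_succ, Fin.cons_zero, Fin.cons_succ, mul_ite,
    mul_zero, ite_and]

theorem rowOp_zero_eq_sum (q p : R) {n : ℕ} (r : Bool) (φ : (Fin n → Bool) → R)
    (s : Fin n → Bool) :
    rowOp q p 0 (fun _ => 0) r φ s =
      ∑ s', rowWeight ((1 + p) ^ 2 * q) r.toInt s s' * φ s' := by
  induction n generalizing r with
  | zero =>
    cases r <;> simp [rowOp, rowWeight, RowValid]
    exact congrArg φ (Subsingleton.elim _ _)
  | succ n ih =>
    obtain ⟨x, t, rfl⟩ : ∃ x t, s = Fin.cons x t := ⟨s 0, Fin.tail s, (Fin.cons_self_tail s).symm⟩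
    rw [← (Fin.consEquiv fun _ => Bool).sum_comp, Fintype.sum_prod_type, Fintype.sum_bool]
    have htail : Fin.tail (fun _ => 0 : Fin (n + 1) → R) = fun _ => 0 := rfl
    have h0 := ih false
    have h1 := ih true
    simp only [Bool.toInt] at h0 h1
    cases r <;> cases x <;>
      simp [rowOp_false_cons_false, rowOp_false_cons_true, rowOp_true_cons_false,
        rowOp_true_cons_true, htail, h0, h1, Fin.consEquiv, rowWeight_cons, vertexA, vertexB,
        vertexC, Bool.toInt, mul_sum, mul_assoc, add_comm]

theorem iterOp_zero_eq_sum (q p : R) {n k : ℕ} (s : Fin n → Bool) :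
    iterOp q p (fun _ : Fin n => 0) k (fun _ => 0) s = ∑ P : Fin k → Fin n → Bool,
      (if (Fin.cons s P : Fin (k + 1) → Fin n → Bool) (Fin.last k) = fun _ => true then 1 else 0) *
        ∏ i : Fin k, rowWeight ((1 + p) ^ 2 * q) 0
          ((Fin.cons s P : Fin (k + 1) → Fin n → Bool) i.castSucc) (P i) := by
  induction k generalizing s with
  | zero => simp [iterOp]
  | succ k ih =>
    have htail : Fin.tail (fun _ => 0 : Fin (k + 1) → R) = fun _ => 0 := rfl
    rw [iterOp, rowOp_zero_eq_sum, htail, ← (Fin.consEquiv fun _ => Fin n → Bool).sum_comp,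
      Fintype.sum_prod_type]
    refine sum_congr rfl fun s' _ => ?_
    rw [ih, mul_sum]
    refine sum_congr rfl fun P _ => ?_
    simp only [Fin.consEquiv_apply, Fin.prod_univ_succ, ← Fin.succ_last, Fin.cons_succ,
      Fin.castSucc_zero, Fin.cons_zero, ← Fin.succ_castSucc, show Bool.toInt false = 0 from rfl]
    ring

/-- The matrix whose column partial sums are given by `P`. -/
def diffMatrix {n : ℕ} (P : Fin n → Fin n → Bool) : Matrix (Fin n) (Fin n) ℤ :=
  fun i j => (P i j).toInt -
    ((Fin.cons (fun _ => false) P : Fin (n + 1) → Fin n → Bool) i.castSucc j).toInt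

theorem sum_Iic_diffMatrix {n : ℕ} (P : Fin n → Fin n → Bool) (i j : Fin n) :
    ∑ k ∈ Iic i, diffMatrix P k j = (P i j).toInt := by
  simpa [diffMatrix] using sum_Iic_succ_sub_castSucc
    (fun k => ((Fin.cons (fun _ => false) P : Fin (n + 1) → Fin n → Bool) k j).toInt) i

theorem sum_diffMatrix {n : ℕ} (P : Fin n → Fin n → Bool) (j : Fin n) :
    ∑ k, diffMatrix P k j =
      ((Fin.cons (fun _ => false) P : Fin (n + 1) → Fin n → Bool) (Fin.last n) j).toInt := by
  simpa [diffMatrix] using sum_succ_sub_castSucc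
    (fun k => ((Fin.cons (fun _ => false) P : Fin (n + 1) → Fin n → Bool) k j).toInt)

theorem diffMatrix_injective {n : ℕ} :
    Function.Injective (diffMatrix : (Fin n → Fin n → Bool) → Matrix (Fin n) (Fin n) ℤ) := by
  intro P P' h
  funext i j
  have := sum_Iic_diffMatrix P i j
  rw [h, sum_Iic_diffMatrix] at this
  cases hP : P i j <;> cases hP' : P' i j <;> simp_all [Bool.toInt]

theorem isASM_diffMatrix_iff {n : ℕ} (P : Fin n → Fin n → Bool) :
    IsASM (diffMatrix P) ↔
      (Fin.cons (fun _ => false) P : Fin (n + 1) → Fin n → Bool) (Fin.last n) = (fun _ => true) ∧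
      ∀ i : Fin n, RowValid 0
        ((Fin.cons (fun _ => false) P : Fin (n + 1) → Fin n → Bool) i.castSucc) (P i) := by
  have htoInt : ∀ b : Bool, b.toInt = 0 ∨ b.toInt = 1 := by decide
  have hone : ∀ b : Bool, b.toInt = 1 ↔ b = true := by decide
  have hentry : ∀ i j, diffMatrix P i j = -1 ∨ diffMatrix P i j = 0 ∨ diffMatrix P i j = 1 := by
    intro i j
    rcases htoInt (P i j) with h | h <;> rcases htoInt
      ((Fin.cons (fun _ => false) P : Fin (n + 1) → Fin n → Bool) i.castSucc j) with h' | h' <;>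
      simp [diffMatrix, h, h']
  simp only [IsASM, sum_Iic_diffMatrix, sum_diffMatrix, hone, RowValid, zero_add, funext_iff]
  constructor
  · rintro ⟨-, hr, hc, hr', -⟩
    exact ⟨hc, fun i => ⟨hr' i, hr i⟩⟩
  · rintro ⟨hc, h⟩
    exact ⟨hentry, fun i => (h i).2, hc, fun i => (h i).1, fun i j => (htoInt _).imp_right (hone _).mp⟩

theorem IsASM.exists_diffMatrix_eq {n : ℕ} {A : Matrix (Fin n) (Fin n) ℤ} (hA : IsASM A) :
    ∃ P, diffMatrix P = A := by
  refine ⟨fun i j => decide (∑ k ∈ Iic i, A k j = 1), ?_⟩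
  funext i j
  refine congrFun (eq_of_sum_Iic_eq (f := fun i => diffMatrix _ i j) (g := fun i => A i j)
    fun i => ?_) i
  rw [sum_Iic_diffMatrix]
  rcases hA.2.2.2.2 i j with h | h <;> simp [h, Bool.toInt]

theorem mem_asmFinset {n : ℕ} {A : Matrix (Fin n) (Fin n) ℤ} : A ∈ asmFinset n ↔ IsASM A := by
  simp only [asmFinset, mem_filter, mem_image, mem_univ, true_and, and_iff_right_iff_imp]
  intro hA
  have h : ∀ i j, ∃ b : Fin 3, ((b : ℕ) : ℤ) - 1 = A i j := by
    intro i j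
    rcases hA.1 i j with h | h | h
    exacts [⟨0, by simp [h]⟩, ⟨1, by simp [h]⟩, ⟨2, by simp [h]⟩]
  choose B hB using h
  exact ⟨B, by ext i j; exact hB i j⟩

theorem pow_asmMu (Q : R) {n : ℕ} (A : Matrix (Fin n) (Fin n) ℤ) :
    Q ^ asmMu A = ∏ i, ∏ j, if A i j = -1 then Q else 1 := by
  rw [← Fintype.prod_prod_type' fun i j => if A i j = -1 then Q else 1, prod_ite]
  simp [asmMu]

theorem asmEnum_eq_partitionFn (q p : R) (n : ℕ) :
    asmEnum n ((1 + p) ^ 2 * q) = partitionFn q p (fun _ : Fin n => 0) fun _ => 0 := by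
  classical
  have himage : asmFinset n = (univ.filter fun P => IsASM (diffMatrix P)).image diffMatrix := by
    ext A
    simp only [mem_asmFinset, mem_image, mem_filter, mem_univ, true_and]
    constructor
    · intro hA
      obtain ⟨P, rfl⟩ := hA.exists_diffMatrix_eq
      exact ⟨P, hA, rfl⟩
    · rintro ⟨P, hP, rfl⟩
      exact hP
  rw [partitionFn, iterOp_zero_eq_sum, asmEnum, himage, sum_image diffMatrix_injective.injOn,
    sum_filter]
  refine sum_congr rfl fun P _ => ?_
  simp only [isASM_diffMatrix_iff, pow_asmMu, rowWeight, prod_ite_zero, ite_and, mem_univ,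
    true_imp_iff, ite_mul, one_mul, zero_mul]
  rfl

end Enumeration

/-- For every positive integer n and every q ∈ ℂ with q ≠ 0, q ≠ -1, the
(2+q+q⁻¹)-enumeration of alternating sign matrices of size n equals
det_{1≤i,j≤n}( binom(i+j-2, j-1)·(1-(-q)^{j-i+1})/(1+q) ). -/
theorem statement0 (n : ℕ) (hn : 1 ≤ n) (q : ℂ) (hq0 : q ≠ 0) (hq1 : q ≠ -1) :
    asmEnum n (2 + q + q⁻¹) =
      Matrix.det (Matrix.of fun i j : Fin n =>
        ((((i : ℕ) + (j : ℕ)).choose (j : ℕ) : ℂ) *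
          (1 - (-q) ^ ((j : ℤ) - (i : ℤ) + 1))) / (1 + q)) := by
  have h1 : 1 + q ≠ 0 := fun h => hq1 (by linear_combination h)
  have hQ : 2 + q + q⁻¹ = (1 + q⁻¹) ^ 2 * q := by
    field_simp
    ring
  rw [hQ, asmEnum_eq_partitionFn, partitionFn_zero q hq0 h1]
  rfl

end
end

section
/- Let n ≥ 2 and k be integers. The following identities hold in ℚ[x][q,q⁻¹]: (i) the determinant of the matrix obtained from D_{n,k}(x,q) by deleting the first row and the first column equals binom(x+n, n−1)·d_{n−1,k}(x+2,q); (ii) deleting the last row and the last column gives d_{n−1,k}(x,q); (iii) for n ≥ 2, deleting the first and last rows and the first and last columns gives binom(x+n−1, n−2)·d_{n−2,k}(x+2,q); (iv) deleting the first row and the last column gives d_{n−1,k−1}(x+1,q); (v) deleting the last row and the first column gives binom(x+n−1, n−1)·d_{n−1,k+1}(x+1,q). -/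
open Polynomial LaurentPolynomial Finset

noncomputable section

/-- The ring ℚ[x][q,q⁻¹]: Laurent polynomials in `q` over ℚ[x]. -/
abbrev RQ : Type := LaurentPolynomial (Polynomial ℚ)

/-- The polynomial binomial coefficient binom(y, m) = y(y-1)⋯(y-m+1)/m!. -/
noncomputable def binomQ (y : Polynomial ℚ) (m : ℕ) : Polynomial ℚ :=
  Polynomial.C ((m.factorial : ℚ))⁻¹ * ∏ t ∈ Finset.range m, (y - (t : Polynomial ℚ))

/-- a_m(q) ∈ ℚ[x][q,q⁻¹]: a_m = ∑_{l=0}^{m-1}(-q)^l for m > 0, a_0 = 0,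
a_m = -∑_{l=1}^{-m}(-q)^{-l} for m < 0.  Here q = T 1. -/
noncomputable def aQ (m : ℤ) : RQ :=
  if 0 < m then ∑ l ∈ Finset.range m.toNat, (-1 : RQ) ^ l * LaurentPolynomial.T (l : ℤ)
  else -∑ l ∈ Finset.range (-m).toNat, (-1 : RQ) ^ (l + 1) * LaurentPolynomial.T (-(l + 1 : ℤ))

/-- The matrix D_{n,k}(x+c, q) (1-based (i,j) entry binom(x+c+i+j-2, j-1)·a_{j-i+k}(q)). -/
noncomputable def Dmat (n : ℕ) (k c : ℤ) : Matrix (Fin n) (Fin n) RQ :=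
  Matrix.of fun i j =>
    LaurentPolynomial.C
      (binomQ (Polynomial.X + Polynomial.C (c : ℚ) + ((i : ℕ) : Polynomial ℚ)
        + ((j : ℕ) : Polynomial ℚ)) (j : ℕ)) *
    aQ ((j : ℤ) - (i : ℤ) + k)

/-- d_{n,k}(x+c, q) := det D_{n,k}(x+c, q). -/
noncomputable def dd (n : ℕ) (k c : ℤ) : RQ := (Dmat n k c).det

/-- `binom(y, j+1) = binom(y, j)·(y-j)/(j+1)`. -/
lemma binomQ_succ (y : Polynomial ℚ) (j : ℕ) :
    binomQ y (j + 1) =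
      (y - (j : Polynomial ℚ)) * (Polynomial.C ((j + 1 : ℕ) : ℚ)⁻¹ * binomQ y j) := by
  simp only [binomQ, Nat.factorial_succ, Nat.cast_mul, mul_inv, Polynomial.C_mul,
    Finset.prod_range_succ]
  ring

/-- `binom(y+n, n)` as a rising product. -/
lemma binomQ_add_self (y : Polynomial ℚ) (n : ℕ) :
    binomQ (y + (n : Polynomial ℚ)) n =
      Polynomial.C ((n.factorial : ℚ))⁻¹ *
        ∏ i ∈ Finset.range n, (y + 1 + (i : Polynomial ℚ)) := by
  rw [binomQ, ← Finset.prod_range_reflect (fun i : ℕ => y + 1 + (i : Polynomial ℚ))]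
  congr 1
  refine Finset.prod_congr rfl fun t ht => ?_
  obtain ⟨d, rfl⟩ := Nat.exists_eq_add_of_lt (Finset.mem_range.mp ht)
  rw [show t + d + 1 - 1 - t = d by omega]
  push_cast
  ring

lemma inv_factorial_eq_prod (n : ℕ) :
    ((n.factorial : ℚ))⁻¹ = ∏ j ∈ Finset.range n, ((j + 1 : ℕ) : ℚ)⁻¹ := by
  rw [Finset.prod_inv_distrib, ← Finset.prod_range_add_one_eq_factorial, Nat.cast_prod]

/-- Shifting the lower binomial index of every column by one multiplies the determinant
by a binomial coefficient: row `i` contributes `y+1+i` and column `j` contributes `1/(j+1)`. -/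
lemma det_map_binomQ_succ {R : Type*} [CommRing R] (f : Polynomial ℚ →+* R) {n : ℕ}
    {y : Polynomial ℚ} {a : Fin n → Fin n → R} {M N : Matrix (Fin n) (Fin n) R}
    (hM : ∀ i j, M i j = f (binomQ
      (y + 1 + ((i : ℕ) : Polynomial ℚ) + ((j : ℕ) : Polynomial ℚ)) ((j : ℕ) + 1)) * a i j)
    (hN : ∀ i j, N i j = f (binomQ
      (y + 1 + ((i : ℕ) : Polynomial ℚ) + ((j : ℕ) : Polynomial ℚ)) (j : ℕ)) * a i j) :
    M.det = f (binomQ (y + (n : Polynomial ℚ)) n) * N.det := by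
  have hfac : f (binomQ (y + (n : Polynomial ℚ)) n) =
      (∏ j : Fin n, f (Polynomial.C (((j : ℕ) + 1 : ℕ) : ℚ)⁻¹)) *
        ∏ i : Fin n, f (y + 1 + ((i : ℕ) : Polynomial ℚ)) := by
    rw [binomQ_add_self, inv_factorial_eq_prod, map_prod, map_mul, map_prod, map_prod,
      ← Fin.prod_univ_eq_prod_range (fun j : ℕ => f (Polynomial.C ((j + 1 : ℕ) : ℚ)⁻¹)),
      ← Fin.prod_univ_eq_prod_range (fun i : ℕ => f (y + 1 + (i : Polynomial ℚ)))]
  rw [hfac, mul_assoc, ← Matrix.det_mul_column, ← Matrix.det_mul_row]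
  congr 1
  ext1 i j
  simp only [Matrix.of_apply, hM, hN, binomQ_succ, map_mul, add_sub_cancel_right]
  ring

lemma Dmat_apply (n : ℕ) (k c : ℤ) (i j : Fin n) :
    Dmat n k c i j = LaurentPolynomial.C
      (binomQ (X + Polynomial.C (c : ℚ) + ((i : ℕ) : Polynomial ℚ)
        + ((j : ℕ) : Polynomial ℚ)) (j : ℕ)) * aQ ((j : ℤ) - (i : ℤ) + k) :=
  rfl

/-- The minor of `D_{N,k}(x+c)` on consecutive rows from `e` and consecutive columns from `1`. -/
lemma det_submatrix_Dmat_succ {n N e : ℕ} {k c : ℤ} (k' c' : ℤ) (y : Polynomial ℚ)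
    {r s : Fin n → Fin N} (hr : ∀ i, (r i : ℕ) = i + e) (hs : ∀ j, (s j : ℕ) = j + 1)
    (hc : c' = c + e + 1) (hk : k' = k + 1 - e)
    (hy : X + Polynomial.C (c' : ℚ) = y + 1) :
    ((Dmat N k c).submatrix r s).det =
      LaurentPolynomial.C (binomQ (y + (n : Polynomial ℚ)) n) * dd n k' c' := by
  refine det_map_binomQ_succ LaurentPolynomial.C
    (a := fun i j => aQ ((j : ℤ) - (i : ℤ) + k')) (fun i j => ?_) (fun i j => ?_)
  · have hp : X + Polynomial.C (c : ℚ) + ((i + e : ℕ) : Polynomial ℚ)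
        + ((j + 1 : ℕ) : Polynomial ℚ)
          = y + 1 + ((i : ℕ) : Polynomial ℚ) + ((j : ℕ) : Polynomial ℚ) := by
      rw [← hy, hc]
      simp only [Int.cast_add, Int.cast_natCast, Int.cast_one, map_add, map_natCast, map_one,
        Nat.cast_add, Nat.cast_one]
      ring
    have he : ((j + 1 : ℕ) : ℤ) - ((i + e : ℕ) : ℤ) + k = (j : ℤ) - (i : ℤ) + k' := by
      rw [hk]
      push_cast
      ring
    rw [Matrix.submatrix_apply, Dmat_apply, hr, hs, hp, he]
  · rw [Dmat_apply, hy]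

/-- The minor of `D_{N,k}(x+c)` on consecutive rows from `e` and consecutive columns from `0`. -/
lemma det_submatrix_Dmat {n N e : ℕ} {k c : ℤ} (k' c' : ℤ)
    {r s : Fin n → Fin N} (hr : ∀ i, (r i : ℕ) = i + e) (hs : ∀ j, (s j : ℕ) = j)
    (hc : c' = c + e) (hk : k' = k - e) :
    ((Dmat N k c).submatrix r s).det = dd n k' c' := by
  rw [dd]
  refine congrArg Matrix.det (Matrix.ext fun i j => ?_)
  have hp : X + Polynomial.C (c : ℚ) + ((i + e : ℕ) : Polynomial ℚ) + ((j : ℕ) : Polynomial ℚ)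
      = X + Polynomial.C (c' : ℚ) + ((i : ℕ) : Polynomial ℚ) + ((j : ℕ) : Polynomial ℚ) := by
    rw [hc]
    simp only [Int.cast_add, Int.cast_natCast, map_add, map_natCast, Nat.cast_add]
    ring
  have he : ((j : ℕ) : ℤ) - ((i + e : ℕ) : ℤ) + k = (j : ℤ) - (i : ℤ) + k' := by
    rw [hk]
    push_cast
    ring
  rw [Matrix.submatrix_apply, Dmat_apply, Dmat_apply, hr, hs, hp, he]

/-- the five minors of D_{n,k}(x,q) (here n = m+2 ≥ 2):
(i) delete first row and first column; (ii) delete last row and last column;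
(iii) delete the first and last rows and columns; (iv) delete first row and last column;
(v) delete last row and first column. -/
theorem statement1 (m : ℕ) (k : ℤ) :
    (((Dmat (m + 2) k 0).submatrix Fin.succ Fin.succ).det
        = LaurentPolynomial.C (binomQ (Polynomial.X + ((m + 2 : ℕ) : Polynomial ℚ)) (m + 1))
            * dd (m + 1) k 2) ∧
    (((Dmat (m + 2) k 0).submatrix Fin.castSucc Fin.castSucc).det = dd (m + 1) k 0) ∧
    (((Dmat (m + 2) k 0).submatrix (fun i : Fin m => i.succ.castSucc)
        (fun j : Fin m => j.succ.castSucc)).det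
        = LaurentPolynomial.C (binomQ (Polynomial.X + ((m + 1 : ℕ) : Polynomial ℚ)) m)
            * dd m k 2) ∧
    (((Dmat (m + 2) k 0).submatrix Fin.succ Fin.castSucc).det = dd (m + 1) (k - 1) 1) ∧
    (((Dmat (m + 2) k 0).submatrix Fin.castSucc Fin.succ).det
        = LaurentPolynomial.C (binomQ (Polynomial.X + ((m + 1 : ℕ) : Polynomial ℚ)) (m + 1))
            * dd (m + 1) (k + 1) 1) := by
  have hX2 : X + Polynomial.C ((2 : ℤ) : ℚ) = (X + 1 : Polynomial ℚ) + 1 := by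
    simp only [Int.cast_ofNat, map_ofNat]
    ring
  have hX (l : ℕ) : X + ((l + 1 : ℕ) : Polynomial ℚ) = X + 1 + (l : Polynomial ℚ) := by
    push_cast
    ring
  refine ⟨?_, ?_, ?_, ?_, ?_⟩
  · rw [hX (m + 1)]
    exact det_submatrix_Dmat_succ (e := 1) k 2 (X + 1) (fun _ => rfl) (fun _ => rfl)
      (by norm_num) (by simp) hX2
  · exact det_submatrix_Dmat (e := 0) k 0 (fun _ => rfl) (fun _ => rfl) (by simp) (by simp)
  · rw [hX m]
    exact det_submatrix_Dmat_succ (e := 1) k 2 (X + 1) (fun _ => rfl) (fun _ => rfl)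
      (by norm_num) (by simp) hX2
  · exact det_submatrix_Dmat (e := 1) (k - 1) 1 (fun _ => rfl) (fun _ => rfl) (by simp) (by simp)
  · exact det_submatrix_Dmat_succ (e := 0) (k + 1) 1 X (fun _ => rfl) (fun _ => rfl)
      (by simp) (by simp) (by simp)

end
end

section
/- For all integers n ≥ 2 and k, the following identity holds in ℚ[x][q,q⁻¹]: (n−1)·d_{n,k}(x,q)·d_{n−2,k}(x+2,q) = (x+n)·d_{n−1,k}(x,q)·d_{n−1,k}(x+2,q) − (x+1)·d_{n−1,k+1}(x+1,q)·d_{n−1,k−1}(x+1,q). -/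
open Polynomial LaurentPolynomial Finset

noncomputable section

namespace Matrix

variable {R : Type*} [CommRing R]

/-- The Jacobi identity for a leading block of the adjugate, before cancelling `A.det`. -/
theorem det_mul_det_toBlocks₁₁_adjugate {p n : Type*} [Fintype p] [DecidableEq p] [Fintype n]
    [DecidableEq n] (A : Matrix (p ⊕ n) (p ⊕ n) R) :
    A.det * A.adjugate.toBlocks₁₁.det = A.det ^ Fintype.card p * A.toBlocks₂₂.det := by
  have hadj := A.mul_adjugate
  rw [← fromBlocks_toBlocks A, ← fromBlocks_toBlocks (adjugate _), fromBlocks_multiply,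
    ← fromBlocks_one, fromBlocks_smul, fromBlocks_inj, fromBlocks_toBlocks] at hadj
  obtain ⟨h₁₁, -, h₂₁, -⟩ := hadj
  have hmul : A * fromBlocks A.adjugate.toBlocks₁₁ 0 A.adjugate.toBlocks₂₁ 1 =
      fromBlocks (A.det • 1) A.toBlocks₁₂ 0 A.toBlocks₂₂ := by
    conv_lhs => enter [1]; rw [← fromBlocks_toBlocks A]
    rw [fromBlocks_multiply, h₁₁, h₂₁]
    simp
  have hdet := congrArg det hmul
  rwa [det_mul, det_fromBlocks_zero₁₂, det_one, mul_one, det_fromBlocks_zero₂₁, det_smul, det_one,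
    mul_one] at hdet

/-- The equivalence listing the two extreme indices first, then the inner ones. -/
def finExtremeInnerEquiv (m : ℕ) : Fin 2 ⊕ Fin m ≃ Fin (m + 2) :=
  Equiv.ofBijective (Sum.elim ![0, Fin.last (m + 1)] fun i => i.succ.castSucc) <| by
    rw [Fintype.bijective_iff_injective_and_card]
    refine ⟨?_, by simp [add_comm]⟩
    rintro (i | i) (j | j) h
    · fin_cases i <;> fin_cases j <;> simp_all [Fin.ext_iff]
    · have := j.isLt
      fin_cases i <;> simp [Fin.ext_iff] at h
      omega
    · have := i.isLt
      fin_cases j <;> simp [Fin.ext_iff] at h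
      omega
    · simpa [Fin.ext_iff] using h

theorem desnanot_jacobi_of_det_ne_zero [IsDomain R] {m : ℕ}
    (A : Matrix (Fin (m + 2)) (Fin (m + 2)) R) (hA : A.det ≠ 0) :
    A.det * (A.submatrix (fun i : Fin m => i.succ.castSucc) fun i => i.succ.castSucc).det =
      (A.submatrix Fin.castSucc Fin.castSucc).det * (A.submatrix Fin.succ Fin.succ).det -
        (A.submatrix Fin.succ Fin.castSucc).det * (A.submatrix Fin.castSucc Fin.succ).det := by
  have key := det_mul_det_toBlocks₁₁_adjugate
    (A.submatrix (finExtremeInnerEquiv m) (finExtremeInnerEquiv m))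
  rw [det_submatrix_equiv_self, adjugate_submatrix_equiv_self, Fintype.card_fin, pow_two,
    mul_assoc] at key
  have key := mul_left_cancel₀ hA key
  have hinner : (A.submatrix (finExtremeInnerEquiv m) (finExtremeInnerEquiv m)).toBlocks₂₂ =
      A.submatrix (fun i : Fin m => i.succ.castSucc) fun i => i.succ.castSucc := rfl
  have h0 : finExtremeInnerEquiv m (Sum.inl 0) = 0 := rfl
  have h1 : finExtremeInnerEquiv m (Sum.inl 1) = Fin.last (m + 1) := rfl
  have hsign : ((-1 : R) ^ (m + 1)) * (-1) ^ (m + 1) = 1 := by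
    rw [← mul_pow]; simp
  rw [hinner, det_fin_two] at key
  simp only [toBlocks₁₁, of_apply, submatrix_apply, h0, h1, adjugate_fin_succ_eq_det_submatrix,
    Fin.succAbove_zero, Fin.succAbove_last, Fin.val_zero, Fin.val_last, add_zero, zero_add,
    pow_add _ (m + 1) (m + 1), hsign, pow_zero, one_mul] at key
  rw [← key]
  linear_combination ((A.submatrix Fin.succ Fin.castSucc).det *
    (A.submatrix Fin.castSucc Fin.succ).det) * -hsign

/-- The Desnanot–Jacobi identity (Dodgson condensation). -/
theorem desnanot_jacobi {m : ℕ} (A : Matrix (Fin (m + 2)) (Fin (m + 2)) R) :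
    A.det * (A.submatrix (fun i : Fin m => i.succ.castSucc) fun i => i.succ.castSucc).det =
      (A.submatrix Fin.castSucc Fin.castSucc).det * (A.submatrix Fin.succ Fin.succ).det -
        (A.submatrix Fin.succ Fin.castSucc).det * (A.submatrix Fin.castSucc Fin.succ).det := by
  have h := congrArg (MvPolynomial.aeval fun p : Fin (m + 2) × Fin (m + 2) => A p.1 p.2)
    (desnanot_jacobi_of_det_ne_zero (mvPolynomialX (Fin (m + 2)) (Fin (m + 2)) ℤ)
      (det_mvPolynomialX_ne_zero _ ℤ))
  simp only [map_mul, map_sub, AlgHom.map_det, AlgHom.mapMatrix_apply, ← submatrix_map] at h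
  simp only [← AlgHom.mapMatrix_apply, mvPolynomialX_mapMatrix_aeval] at h
  exact h

end Matrix

section Pochhammer

variable {R : Type*} [CommRing R]

/-- The rising factorial `y (y + 1) ⋯ (y + n - 1)`. -/
def risingFactorial (y : R) (n : ℕ) : R := ∏ t ∈ range n, (y + t)

theorem risingFactorial_succ (y : R) (n : ℕ) :
    risingFactorial y (n + 1) = risingFactorial y n * (y + n) := prod_range_succ _ _

theorem risingFactorial_succ_left (y : R) (n : ℕ) :
    risingFactorial y (n + 1) = y * risingFactorial (y + 1) n := by
  simp only [risingFactorial, prod_range_succ', Nat.cast_add, Nat.cast_one, Nat.cast_zero, add_zero]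
  rw [mul_comm]
  congr 1
  exact prod_congr rfl fun t _ => by ring

theorem risingFactorial_add (y : R) (m n : ℕ) :
    risingFactorial y (m + n) = risingFactorial y m * ∏ t ∈ range n, (y + m + t) := by
  simp only [risingFactorial, prod_range_add, Nat.cast_add, add_assoc]

theorem prod_range_risingFactorial_succ (y : R) (n : ℕ) :
    ∏ i ∈ range (n + 1), risingFactorial y i =
      y ^ n * ∏ i ∈ range n, risingFactorial (y + 1) i := by
  rw [prod_range_succ']
  simp only [risingFactorial_succ_left, prod_mul_distrib, prod_const, card_range]
  simp [risingFactorial]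

/-- The determinant of `((y)_{i+j} b_{j-i+k})` for `0 ≤ i, j < n`. -/
def risingDet (b : ℤ → R) (n : ℕ) (y : R) (k : ℤ) : R :=
  (Matrix.of fun i j : Fin n => risingFactorial y (i + j : ℕ) * b ((j : ℤ) - i + k)).det

/-- Condensation for `risingDet`. -/
theorem risingDet_condensation (b : ℤ → R) (m : ℕ) (y : R) (k : ℤ) :
    risingDet b (m + 2) y k * ((y * (y + 1)) ^ m * risingDet b m (y + 2) k) =
      risingDet b (m + 1) y k * ((y * (y + 1)) ^ (m + 1) * risingDet b (m + 1) (y + 2) k) -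
        (y ^ (m + 1) * risingDet b (m + 1) (y + 1) (k - 1)) *
          (y ^ (m + 1) * risingDet b (m + 1) (y + 1) (k + 1)) := by
  have scale (n : ℕ) (c : R) (A : Matrix (Fin n) (Fin n) R) : c ^ n * A.det = (c • A).det := by
    simp
  have two : y + 1 + 1 = y + 2 := by ring
  simp only [risingDet, scale]
  refine Eq.trans ?_ ((Matrix.desnanot_jacobi (Matrix.of fun i j : Fin (m + 2) =>
    risingFactorial y (i + j : ℕ) * b ((j : ℤ) - i + k))).trans ?_)
  · congr 2
    ext i j
    have h : (i + 1 + (j + 1) : ℕ) = i + j + 1 + 1 := by ring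
    simp only [Matrix.smul_apply, Matrix.of_apply, Matrix.submatrix_apply, Fin.val_castSucc,
      Fin.val_succ, h, risingFactorial_succ_left, two, smul_eq_mul]
    push_cast
    ring_nf
  · congr 3
    · ext i j
      have h : (i + 1 + (j + 1) : ℕ) = i + j + 1 + 1 := by ring
      simp only [Matrix.smul_apply, Matrix.of_apply, Matrix.submatrix_apply,
        Fin.val_succ, h, risingFactorial_succ_left, two, smul_eq_mul]
      push_cast
      ring_nf
    · ext i j
      have h : (i + 1 + j : ℕ) = i + j + 1 := by ring
      simp only [Matrix.smul_apply, Matrix.of_apply, Matrix.submatrix_apply, Fin.val_castSucc,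
        Fin.val_succ, h, risingFactorial_succ_left, smul_eq_mul]
      push_cast
      ring_nf
    · ext i j
      have h : (i + (j + 1) : ℕ) = i + j + 1 := by ring
      simp only [Matrix.smul_apply, Matrix.of_apply, Matrix.submatrix_apply, Fin.val_castSucc,
        Fin.val_succ, h, risingFactorial_succ_left, smul_eq_mul]
      push_cast
      ring_nf

end Pochhammer

theorem factorial_mul_binomQ_mul_risingFactorial (y : ℚ[X]) (i j : ℕ) :
    (j.factorial : ℚ[X]) * risingFactorial (y + 1) i * binomQ (y + i + j) j =
      risingFactorial (y + 1) (i + j) := by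
  have hfac : (j.factorial : ℚ[X]) * Polynomial.C (j.factorial : ℚ)⁻¹ = 1 := by
    rw [← map_natCast (Polynomial.C : ℚ →+* ℚ[X]), ← map_mul,
      mul_inv_cancel₀ (by exact_mod_cast j.factorial_ne_zero), map_one]
  have hprod : ∏ t ∈ range j, (y + i + j - (t : ℚ[X])) = ∏ t ∈ range j, (y + 1 + i + t) := by
    rw [← prod_range_reflect]
    refine prod_congr rfl fun t ht => ?_
    have ht := mem_range.mp ht
    rw [Nat.sub_sub, Nat.cast_sub (by omega)]
    push_cast
    ring
  rw [risingFactorial_add, binomQ, hprod]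
  linear_combination (risingFactorial (y + 1) i * ∏ t ∈ range j, (y + 1 + i + t)) * hfac

theorem map_risingFactorial {R S : Type*} [CommRing R] [CommRing S] (f : R →+* S) (y : R) (n : ℕ) :
    f (risingFactorial y n) = risingFactorial (f y) n := by
  simp [risingFactorial]

/-- `dd` is `risingDet` after clearing the row and column factors. -/
theorem risingDet_aQ_eq (n : ℕ) (k c : ℤ) (y : RQ)
    (hy : y = LaurentPolynomial.C (Polynomial.X + Polynomial.C (c : ℚ) + 1)) :
    risingDet aQ n y k = (∏ i ∈ range n, (i.factorial : RQ)) *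
      (∏ i ∈ range n, risingFactorial y i) * dd n k c := by
  rw [dd, ← Fin.prod_univ_eq_prod_range, ← Fin.prod_univ_eq_prod_range, mul_assoc,
    ← Matrix.det_mul_column, ← Matrix.det_mul_row, risingDet]
  congr 1
  ext1 i j
  simp only [Matrix.of_apply, Dmat, hy, ← map_risingFactorial,
    ← factorial_mul_binomQ_mul_risingFactorial, map_mul, map_natCast]
  ring

theorem laurentC_injective : Function.Injective (LaurentPolynomial.C : ℚ[X] → RQ) := fun p r h => by
  rwa [← Polynomial.toLaurent_C, ← Polynomial.toLaurent_C, Polynomial.toLaurent_inj,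
    Polynomial.C_inj] at h

theorem risingFactorial_X_ne_zero (n : ℕ) :
    risingFactorial (LaurentPolynomial.C (Polynomial.X + 1) : RQ) n ≠ 0 := by
  rw [← map_risingFactorial, Ne, map_eq_zero_iff _ laurentC_injective]
  refine prod_ne_zero_iff.mpr fun t _ => ?_
  have : (Polynomial.X + 1 + (t : ℚ[X])) = Polynomial.X + Polynomial.C ((1 : ℚ) + t) := by
    simp [add_assoc]
  rw [this]
  exact Polynomial.X_add_C_ne_zero _

/-- condensation identity, n = m+2 ≥ 2: (n-1)·d_{n,k}(x,q)·d_{n-2,k}(x+2,q)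
= (x+n)·d_{n-1,k}(x,q)·d_{n-1,k}(x+2,q) - (x+1)·d_{n-1,k+1}(x+1,q)·d_{n-1,k-1}(x+1,q). -/
theorem statement2 (m : ℕ) (k : ℤ) :
    ((m : RQ) + 1) * dd (m + 2) k 0 * dd m k 2 =
      LaurentPolynomial.C (Polynomial.X + ((m + 2 : ℕ) : Polynomial ℚ))
          * dd (m + 1) k 0 * dd (m + 1) k 2
        - LaurentPolynomial.C (Polynomial.X + 1)
          * dd (m + 1) (k + 1) 1 * dd (m + 1) (k - 1) 1 := by
  set y : RQ := LaurentPolynomial.C (Polynomial.X + 1) with hy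
  have hx : LaurentPolynomial.C (Polynomial.X + ((m + 2 : ℕ) : Polynomial ℚ)) = y + ((m : RQ) + 1) := by
    rw [hy]; simp only [map_add, map_natCast, map_one]; push_cast; ring
  have h0 : y = LaurentPolynomial.C (Polynomial.X + Polynomial.C ((0 : ℤ) : ℚ) + 1) := by simp [hy]
  have h1 : y + 1 = LaurentPolynomial.C (Polynomial.X + Polynomial.C ((1 : ℤ) : ℚ) + 1) := by
    simp [hy]
  have h2 : y + 2 = LaurentPolynomial.C (Polynomial.X + Polynomial.C ((2 : ℤ) : ℚ) + 1) := by
    have : Polynomial.C ((2 : ℤ) : ℚ) = (2 : ℚ[X]) := rfl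
    rw [hy, this]; simp only [map_add, map_one, map_ofNat]; ring
  have key := risingDet_condensation aQ m y k
  rw [risingDet_aQ_eq _ _ _ _ h0, risingDet_aQ_eq _ _ _ _ h0, risingDet_aQ_eq _ _ _ _ h1,
    risingDet_aQ_eq _ _ _ _ h1, risingDet_aQ_eq _ _ _ _ h2, risingDet_aQ_eq _ _ _ _ h2] at key
  have two : y + 1 + 1 = y + 2 := by ring
  have hF2 : ∏ i ∈ range (m + 2), (i.factorial : RQ) =
      (∏ i ∈ range m, (i.factorial : RQ)) * m.factorial * ((m + 1) * m.factorial) := by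
    rw [prod_range_succ, prod_range_succ, Nat.factorial_succ]; push_cast; ring
  have hF1 := prod_range_succ (fun i => (i.factorial : RQ)) m
  have hG2 := prod_range_succ (risingFactorial y) (m + 1)
  have hG3 := prod_range_succ (risingFactorial y) (m + 2)
  have e2 := prod_range_risingFactorial_succ y (m + 1)
  have e3 := prod_range_risingFactorial_succ y (m + 2)
  have e11 := prod_range_risingFactorial_succ (y + 1) m
  have e12 := prod_range_risingFactorial_succ (y + 1) (m + 1)
  have hP := risingFactorial_succ y (m + 1)
  have hFne : ∏ i ∈ range (m + 1), (i.factorial : RQ) ≠ 0 :=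
    prod_ne_zero_iff.mpr fun i _ => by
      rw [← map_natCast (LaurentPolynomial.C : ℚ[X] →+* RQ), Ne,
        map_eq_zero_iff _ laurentC_injective]
      exact_mod_cast i.factorial_ne_zero
  have hGne : ∏ i ∈ range (m + 2), risingFactorial y i ≠ 0 :=
    prod_ne_zero_iff.mpr fun i _ => risingFactorial_X_ne_zero i
  rw [two] at e11 e12
  rw [hx]
  refine mul_left_cancel₀ (pow_ne_zero 2 (mul_ne_zero hFne hGne)) ?_
  have hF : (∏ i ∈ range (m + 2), (i.factorial : RQ)) * ∏ i ∈ range m, (i.factorial : RQ) =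
      (m + 1) * (∏ i ∈ range (m + 1), (i.factorial : RQ)) ^ 2 := by
    rw [hF2, hF1]; ring
  generalize ∏ i ∈ range (m + 2), (i.factorial : RQ) = F₂ at *
  generalize ∏ i ∈ range (m + 1), (i.factorial : RQ) = F₁ at *
  generalize ∏ i ∈ range m, (i.factorial : RQ) = F₀ at *
  have cleft : (∏ i ∈ range (m + 2), risingFactorial y i) *
      ((y * (y + 1)) ^ m * ∏ i ∈ range m, risingFactorial (y + 2) i) * y =
      (∏ i ∈ range (m + 2), risingFactorial y i) ^ 2 := by
    rw [mul_pow, e2, e11]; ring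
  have cmid : (∏ i ∈ range (m + 1), risingFactorial y i) *
      ((y * (y + 1)) ^ (m + 1) * ∏ i ∈ range (m + 1), risingFactorial (y + 2) i) * y =
      (∏ i ∈ range (m + 2), risingFactorial y i) ^ 2 * (y + (m + 1)) := by
    rw [mul_pow]
    rw [hG3, hP, e12] at e3
    push_cast at e3
    linear_combination (∏ i ∈ range (m + 2), risingFactorial y i) * (y + (m + 1)) * -hG2 -
      (∏ i ∈ range (m + 1), risingFactorial y i) * e3
  have cright : (∏ i ∈ range (m + 2), risingFactorial y i) ^ 2 =
      (y ^ (m + 1) * ∏ i ∈ range (m + 1), risingFactorial (y + 1) i) ^ 2 := by rw [e2]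
  linear_combination y * key + y * F₁ ^ 2 * dd (m + 1) (k + 1) 1 * dd (m + 1) (k - 1) 1 * cright +
    F₁ ^ 2 * dd (m + 1) k 0 * dd (m + 1) k 2 * cmid -
    F₂ * F₀ * dd (m + 2) k 0 * dd m k 2 * cleft -
    (∏ i ∈ range (m + 2), risingFactorial y i) ^ 2 * dd (m + 2) k 0 * dd m k 2 * hF

end
end

section
/- Let n and k be positive integers. Then, in the ring ℚ[q,q⁻¹][x], the determinant d_{n,k}(x,q) is divisible by the polynomial ∏_{l=0}^{⌊(n−k−1)/2⌋}(x+k+2l+1) (the product being empty, hence equal to 1, if n−k−1 < 0). -/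
open Polynomial LaurentPolynomial Finset

noncomputable section

/-- `binom(X + i + j, j)` vanishes at `X = -r` for `i < r ≤ i + j`. -/
theorem X_add_C_dvd_binomQ {i j r : ℕ} (hi : i < r) (hr : r ≤ i + j) :
    (X + Polynomial.C (r : ℚ)) ∣ binomQ (X + Polynomial.C ((0 : ℤ) : ℚ) + (i : Polynomial ℚ) + (j : Polynomial ℚ)) j := by
  refine Dvd.dvd.mul_left (dvd_trans (dvd_of_eq ?_)
    (Finset.dvd_prod_of_mem _ (Finset.mem_range.2 (show i + j - r < j by omega)))) _
  rw [Nat.cast_sub hr]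
  push_cast
  simp only [map_natCast, map_zero]
  ring

theorem aQ_zero : aQ 0 = 0 := by simp [aQ]

/-- Modulo `X + (k + 2l + 1)`, the rows `k + l, …, k + 2l` are supported in the columns `j < l`. -/
theorem dvd_Dmat_apply {n k l : ℕ} (i j : Fin n) (hi : k + l ≤ (i : ℕ))
    (hi' : (i : ℕ) < k + 2 * l + 1) (hj : l ≤ (j : ℕ)) :
    LaurentPolynomial.C (X + Polynomial.C ((k : ℚ) + 2 * l + 1)) ∣ Dmat n (k : ℤ) 0 i j := by
  unfold Dmat
  rw [Matrix.of_apply]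
  by_cases h : k + 2 * l + 1 ≤ (i : ℕ) + (j : ℕ)
  · refine Dvd.dvd.mul_right (_root_.map_dvd _ ?_) _
    have := X_add_C_dvd_binomQ hi' h
    push_cast at this ⊢
    exact this
  · rw [show ((j : ℕ) : ℤ) - ((i : ℕ) : ℤ) + (k : ℤ) = 0 by omega, aQ_zero, mul_zero]
    exact dvd_zero _

/-- If, modulo `p`, the rows in `S` are supported in fewer than `#S` columns, then the determinant
vanishes modulo `p`. -/
theorem dvd_det_of_card_lt {R ι : Type*} [CommRing R] [Fintype ι] [DecidableEq ι]
    (A : Matrix ι ι R) (p : R) (S T : Finset ι) (hST : T.card < S.card)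
    (hA : ∀ i ∈ S, ∀ j ∉ T, p ∣ A i j) : p ∣ A.det := by
  rw [← Matrix.det_transpose, Matrix.det_apply']
  refine Finset.dvd_sum fun σ _ => Dvd.dvd.mul_left ?_ _
  obtain ⟨i, hi, hσ⟩ : ∃ i ∈ S, σ i ∉ T := by
    by_contra! h
    exact hST.not_ge (Finset.card_le_card_of_injOn σ h σ.injective.injOn)
  exact (hA i hi _ hσ).trans (Finset.dvd_prod_of_mem (fun i => A.transpose (σ i) i)
    (Finset.mem_univ i))

/-- The determinant vanishes modulo `X + (k + 2l + 1)`, since `l + 1` rows are supported in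
`l` columns. -/
theorem dvd_dd {n k l : ℕ} (h : k + 2 * l + 1 ≤ n) :
    LaurentPolynomial.C (X + Polynomial.C ((k : ℚ) + 2 * l + 1)) ∣ dd n (k : ℤ) 0 := by
  refine dvd_det_of_card_lt _ _ (Finset.Icc ⟨k + l, by omega⟩ ⟨k + 2 * l, by omega⟩)
    (Finset.Iio ⟨l, by omega⟩) ?_ fun i hi j hj => ?_
  · rw [Fin.card_Iio, Fin.card_Icc]
    change l < k + 2 * l + 1 - (k + l)
    omega
  · rw [Finset.mem_Icc, Fin.le_def, Fin.le_def] at hi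
    rw [Finset.mem_Iio, not_lt, Fin.le_def] at hj
    exact dvd_Dmat_apply i j hi.1 (Nat.lt_succ_of_le hi.2) hj

/-- for positive integers n, k, the polynomial
∏_{l=0}^{⌊(n-k-1)/2⌋}(x+k+2l+1) (with ⌊(n-k-1)/2⌋+1 = ⌊(n-k+1)/2⌋ factors, the empty product
if n-k-1 < 0) divides d_{n,k}(x,q) in ℚ[x][q,q⁻¹]. -/
theorem statement3 (n k : ℕ) (hn : 1 ≤ n) (hk : 1 ≤ k) :
    LaurentPolynomial.C (∏ l ∈ Finset.range ((n - k + 1) / 2),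
        (Polynomial.X + Polynomial.C ((k : ℚ) + 2 * l + 1)))
      ∣ dd n (k : ℤ) 0 := by
  rw [map_prod]
  refine Finset.prod_dvd_of_coprime (fun s _ t _ hst => IsCoprime.map ?_ _) fun l hl => dvd_dd ?_
  · have hne : (-((k : ℚ) + 2 * s + 1)) - (-((k : ℚ) + 2 * t + 1)) ≠ 0 := by
      intro h
      exact hst (by exact_mod_cast (by linarith : (s : ℚ) = t))
    simpa only [map_neg, sub_neg_eq_add] using isCoprime_X_sub_C_of_isUnit_sub hne.isUnit
  · have := Finset.mem_range.1 hl
    omega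

end
end

section
/- For every odd positive integer n, the determinant d_{n,0}(x,q) is identically zero, i.e. d_{n,0}(x,q) = 0 in ℚ[x][q,q⁻¹]. -/
open Polynomial LaurentPolynomial Finset

noncomputable section

/-- A matrix of odd size over a domain of characteristic zero is singular if it becomes
skew-symmetric after scaling its rows by nonzero factors. -/
theorem Matrix.det_eq_zero_of_odd_of_row_smul_skew {R : Type*} [CommRing R] [IsDomain R]
    [CharZero R] {n : ℕ} (hodd : Odd n) (M : Matrix (Fin n) (Fin n) R) (w : Fin n → R)
    (hw : ∀ i, w i ≠ 0) (h : ∀ i j, w i * M i j = -(w j * M j i)) : M.det = 0 := by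
  have hskew : (Matrix.diagonal w * M).transpose = -(Matrix.diagonal w * M) := by
    ext i j
    simpa [Matrix.diagonal_mul] using h j i
  have hdet : (Matrix.diagonal w * M).det = 0 := by
    have := congrArg Matrix.det hskew
    rw [Matrix.det_transpose, Matrix.det_neg, Fintype.card_fin, hodd.neg_one_pow,
      neg_one_mul] at this
    exact self_eq_neg.mp this
  rw [Matrix.det_mul, Matrix.det_diagonal] at hdet
  exact (mul_eq_zero.mp hdet).resolve_left (Finset.prod_ne_zero_iff.mpr fun i _ => hw i)

theorem binomQ_add_nat (y : Polynomial ℚ) (m : ℕ) :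
    binomQ (y + (m : Polynomial ℚ)) m =
      Polynomial.C ((m.factorial : ℚ))⁻¹ *
        ∏ t ∈ Finset.range m, (y + ((t + 1 : ℕ) : Polynomial ℚ)) := by
  rw [binomQ, ← Finset.prod_range_reflect]
  congr 1
  refine Finset.prod_congr rfl fun t ht => ?_
  have ht : m = (m - 1 - t) + (t + 1) := by have := Finset.mem_range.mp ht; omega
  conv_lhs => enter [1, 2]; rw [ht]
  push_cast
  ring

theorem binomQ_mul_binomQ (y : Polynomial ℚ) (i j : ℕ) :
    binomQ (y + (i : Polynomial ℚ)) i * binomQ (y + (i : Polynomial ℚ) + (j : Polynomial ℚ)) j =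
      Polynomial.C ((i.factorial : ℚ))⁻¹ * Polynomial.C ((j.factorial : ℚ))⁻¹ *
        ∏ t ∈ Finset.range (i + j), (y + ((t + 1 : ℕ) : Polynomial ℚ)) := by
  have h : ∏ t ∈ Finset.range j, (y + (i : Polynomial ℚ) + ((t + 1 : ℕ) : Polynomial ℚ)) =
      ∏ t ∈ Finset.range j, (y + ((i + t + 1 : ℕ) : Polynomial ℚ)) :=
    Finset.prod_congr rfl fun t _ => by push_cast; ring
  rw [binomQ_add_nat, binomQ_add_nat, Finset.prod_range_add, h]
  ring

theorem binomQ_mul_binomQ_symm (y : Polynomial ℚ) (i j : ℕ) :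
    binomQ (y + (i : Polynomial ℚ)) i * binomQ (y + (i : Polynomial ℚ) + (j : Polynomial ℚ)) j =
      binomQ (y + (j : Polynomial ℚ)) j *
        binomQ (y + (j : Polynomial ℚ) + (i : Polynomial ℚ)) i := by
  rw [binomQ_mul_binomQ, binomQ_mul_binomQ, add_comm j i]
  ring

theorem binomQ_X_add_nat_ne_zero (m : ℕ) :
    binomQ (Polynomial.X + (m : Polynomial ℚ)) m ≠ 0 := by
  rw [binomQ_add_nat]
  refine mul_ne_zero (Polynomial.C_ne_zero.mpr (by positivity))
    (Finset.prod_ne_zero_iff.mpr fun t _ => ?_)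
  exact (Polynomial.monic_X_add_C ((t + 1 : ℕ) : ℚ)).ne_zero

/-- The negation inferred on `RQ` is not syntactically that of its ring structure,
so that `mul_neg` does not rewrite here. -/
theorem RQ.mul_neg (a b : RQ) : a * -b = -(a * b) := by
  ring

theorem LaurentPolynomial.C_injective {R : Type*} [Semiring R] :
    Function.Injective (LaurentPolynomial.C : R → LaurentPolynomial R) := fun a b h => by
  simpa using congrArg (fun p => p.coeff 0) h

theorem aQ_natCast (m : ℕ) :
    aQ m = ∑ l ∈ Finset.range m, (-1 : RQ) ^ l * LaurentPolynomial.T (l : ℤ) := by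
  rcases m.eq_zero_or_pos with rfl | hm
  · simp [aQ]
  · simp [aQ, hm]

theorem aQ_neg_natCast (m : ℕ) :
    (-1 : RQ) ^ m * LaurentPolynomial.T (m : ℤ) * aQ (-m) = -aQ m := by
  rw [aQ_natCast, aQ, if_neg (by omega), neg_neg, Int.toNat_natCast,
    RQ.mul_neg, Finset.mul_sum, ← Finset.sum_range_reflect]
  congr 1
  refine Finset.sum_congr rfl fun l hl => ?_
  obtain ⟨k, rfl⟩ : ∃ k, m = l + 1 + k := Nat.exists_eq_add_of_le (Finset.mem_range.mp hl)
  rw [show l + 1 + k - 1 - l = k by omega, mul_mul_mul_comm, ← pow_add, ← LaurentPolynomial.T_add,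
    show l + 1 + k + (k + 1) = l + 2 * (k + 1) by ring, pow_add, pow_mul,
    show (-1 : RQ) ^ 2 = 1 by ring, one_pow,
    mul_one]
  congr 2
  push_cast
  ring

/-- The relation `(-q)^i a_{j-i} = -(-q)^j a_{i-j}`. -/
theorem aQ_sub_skew (i j : ℕ) :
    (-1 : RQ) ^ i * LaurentPolynomial.T (i : ℤ) * aQ ((j : ℤ) - i) =
      -((-1 : RQ) ^ j * LaurentPolynomial.T (j : ℤ) * aQ ((i : ℤ) - j)) := by
  wlog hij : i ≤ j generalizing i j
  · rw [this j i (by omega), neg_neg]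
  obtain ⟨m, rfl⟩ := Nat.exists_eq_add_of_le hij
  have h := aQ_neg_natCast m
  rw [show ((i + m : ℕ) : ℤ) - i = m by push_cast; ring,
    show (i : ℤ) - (i + m : ℕ) = -m by push_cast; ring, ← neg_eq_iff_eq_neg.mpr h, pow_add,
    Nat.cast_add, LaurentPolynomial.T_add]
  ring

/-- for every odd positive integer n, d_{n,0}(x,q) = 0. -/
theorem statement5 (n : ℕ) (hpos : 0 < n) (hodd : Odd n) : dd n 0 0 = 0 := by
  have : CharZero RQ := charZero_of_injective_ringHom
    (LaurentPolynomial.C_injective (R := Polynomial ℚ))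
  refine Matrix.det_eq_zero_of_odd_of_row_smul_skew hodd _
    (fun i => LaurentPolynomial.C (binomQ (Polynomial.X + ((i : ℕ) : Polynomial ℚ)) i) *
      ((-1 : RQ) ^ (i : ℕ) * LaurentPolynomial.T ((i : ℕ) : ℤ))) (fun i => ?_) fun i j => ?_
  · refine mul_ne_zero ?_ (mul_ne_zero (pow_ne_zero _ (neg_ne_zero.mpr one_ne_zero))
      (LaurentPolynomial.isUnit_T _).ne_zero)
    exact (map_ne_zero_iff _ LaurentPolynomial.C_injective).mpr (binomQ_X_add_nat_ne_zero i)
  · have hb := congrArg (LaurentPolynomial.C (R := Polynomial ℚ))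
      (binomQ_mul_binomQ_symm Polynomial.X i j)
    rw [map_mul, map_mul] at hb
    simp only [Dmat, Matrix.of_apply, Int.cast_zero, map_zero, add_zero]
    rw [mul_mul_mul_comm, hb, aQ_sub_skew, mul_mul_mul_comm, RQ.mul_neg]

end
end

section
/- For every positive integer n and every integer k there exists a (necessarily unique) polynomial f_{n,k}(x,q) ∈ ℚ[x,q] such that, in ℚ[x][q,q⁻¹], d_{n,k}(x,q) = q^{c(n,k)}·p_{n,k}(x)·f_{n,k}(x,q). In particular, q^{−c(n,k)}·d_{n,k}(x,q) involves no negative powers of q and is divisible in ℚ[x,q] by p_{n,k}(x). -/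
open Polynomial LaurentPolynomial Finset

noncomputable section

/-- The exponent c(n,k): 0 if k > 0 and n ≤ k; nk if k < 0 and n ≤ -k;
-∑_{i=1}^{n-k}⌊i/2⌋ otherwise. -/
def cExp (n : ℕ) (k : ℤ) : ℤ :=
  if 0 < k ∧ (n : ℤ) ≤ k then 0
  else if k < 0 ∧ (n : ℤ) ≤ -k then (n : ℤ) * k
  else -((∑ i ∈ Finset.range ((n : ℤ) - k).toNat, ((i + 1) / 2) : ℕ) : ℤ)

/-- p_{n,k}(x) = ∏_{i=1}^{n-1}(⌊i/2⌋!/i!) · ∏_{i=0}^{⌊(n-|k|-1)/2⌋}(x+|k|+2i+1),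
the second product (with ⌊(n-|k|+1)/2⌋ factors) being empty if n-|k|-1 < 0. -/
noncomputable def pPoly (n : ℕ) (k : ℤ) : Polynomial ℚ :=
  Polynomial.C (∏ i ∈ Finset.range (n - 1),
      (((i + 1) / 2).factorial : ℚ) / ((i + 1).factorial : ℚ)) *
  ∏ i ∈ Finset.range ((n - k.natAbs + 1) / 2),
    (Polynomial.X + Polynomial.C ((k.natAbs : ℚ) + 2 * i + 1))

/-- Multiplying `a_m` by `q ^ e` clears its negative powers of `q`, provided `e ≥ 0` when `m > 0`
and `e ≥ -m` when `m < 0`. -/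
lemma T_mul_aQ_mem_range (m e : ℤ) (hpos : 0 < m → 0 ≤ e) (hneg : m < 0 → 0 ≤ e + m) :
    T e * aQ m ∈ (toLaurent : (ℚ[X])[X] →+* RQ).range := by
  have hT : ∀ z : ℤ, 0 ≤ z → (T z : RQ) ∈ (toLaurent : (ℚ[X])[X] →+* RQ).range := by
    intro z hz
    lift z to ℕ using hz
    exact ⟨X ^ z, by simp⟩
  have hsign : ∀ l : ℕ, (-1 : RQ) ^ l ∈ (toLaurent : (ℚ[X])[X] →+* RQ).range :=
    fun l => pow_mem (neg_mem (one_mem _)) l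
  unfold aQ
  split_ifs with h
  · rw [Finset.mul_sum]
    refine sum_mem fun l _ => ?_
    rw [mul_left_comm, ← T_add]
    exact mul_mem (hsign l) (hT _ (by have := hpos h; omega))
  · have hmul_neg (u v : RQ) : u * -v = -(u * v) := mul_neg u v
    rw [hmul_neg, Finset.mul_sum]
    refine neg_mem (sum_mem fun l hl => ?_)
    rw [mul_left_comm, ← T_add]
    have hl' := Finset.mem_range.mp hl
    exact mul_mem (hsign _) (hT _ (by have := hneg (by omega); omega))

lemma T_sum {ι : Type*} (s : Finset ι) (f : ι → ℤ) :
    (T (∑ i ∈ s, f i) : RQ) = ∏ i ∈ s, T (f i) := by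
  classical
  induction s using Finset.induction_on with
  | empty => simp
  | insert a s ha ih => rw [Finset.sum_insert ha, Finset.prod_insert ha, T_add, ih]

/-- Row and column scaling by powers of `q` clears the negative powers of `q` in the determinant. -/
lemma T_mul_dd_mem_range (n : ℕ) (k c : ℤ) (r s : ℕ → ℤ)
    (hpos : ∀ i < n, ∀ j < n, 0 < (j : ℤ) - i + k → 0 ≤ r i + s j)
    (hneg : ∀ i < n, ∀ j < n, (j : ℤ) - i + k < 0 → 0 ≤ r i + s j + (j - i + k))
    (e : ℤ) (he : ∑ i ∈ Finset.range n, r i + ∑ j ∈ Finset.range n, s j ≤ e) :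
    T e * dd n k c ∈ (toLaurent : (ℚ[X])[X] →+* RQ).range := by
  have hscale : (T (∑ i ∈ Finset.range n, r i + ∑ j ∈ Finset.range n, s j) : RQ) * dd n k c =
      (Matrix.of fun i j : Fin n => T (s j) *
        (Matrix.of fun i j : Fin n => T (r i) * Dmat n k c i j) i j).det := by
    rw [Matrix.det_mul_row (fun j : Fin n => (T (s j) : RQ)),
      Matrix.det_mul_column (fun i : Fin n => (T (r i) : RQ)), T_add, T_sum, T_sum,
      Finset.prod_range, Finset.prod_range, dd]
    ring
  have hT : (T (e - (∑ i ∈ Finset.range n, r i + ∑ j ∈ Finset.range n, s j)) : RQ) ∈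
      (toLaurent : (ℚ[X])[X] →+* RQ).range := by
    obtain ⟨z, hz⟩ := Int.eq_ofNat_of_zero_le (sub_nonneg.mpr he)
    rw [hz]
    exact ⟨X ^ z, by simp⟩
  rw [← sub_add_cancel e (∑ i ∈ Finset.range n, r i + ∑ j ∈ Finset.range n, s j), T_add,
    mul_assoc, hscale, Matrix.det_apply]
  refine mul_mem hT (sum_mem fun σ _ => zsmul_mem (prod_mem fun i _ => ?_) _)
  have hentry := T_mul_aQ_mem_range ((i : ℕ) - (σ i : ℕ) + k) (r (σ i) + s i)
    (hpos _ (σ i).2 _ i.2) (hneg _ (σ i).2 _ i.2)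
  simp only [Matrix.of_apply, Dmat]
  rw [mul_left_comm (T (r _)), mul_left_comm (T (s _)), ← mul_assoc (T (s _)), ← T_add,
    add_comm (s _)]
  exact mul_mem ⟨Polynomial.C _, toLaurent_C _⟩ hentry

lemma two_mul_sum_range_max_sub_le (n : ℕ) (t : ℤ) :
    2 * ∑ i ∈ Finset.range n, max 0 ((i : ℤ) - t) ≤
      max 0 ((n : ℤ) - 1 - t) * (max 0 ((n : ℤ) - 1 - t) + 1) := by
  induction n with
  | zero => simp only [Finset.range_zero, Finset.sum_empty]; positivity
  | succ n ih =>
    rw [Finset.sum_range_succ]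
    push_cast
    rcases le_or_gt ((n : ℤ) - t) 0 with h | h
    · rw [max_eq_left (by omega : (n : ℤ) - 1 - t ≤ 0)] at ih
      rw [max_eq_left h, max_eq_left (by omega : (n : ℤ) + 1 - 1 - t ≤ 0)]
      linarith
    · rw [max_eq_right (by omega : 0 ≤ (n : ℤ) - 1 - t)] at ih
      rw [max_eq_right h.le, max_eq_right (by omega : 0 ≤ (n : ℤ) + 1 - 1 - t)]
      linarith

lemma two_mul_sum_range_max_rsub_le (n : ℕ) (b : ℤ) (hb : 0 ≤ b) :
    2 * ∑ j ∈ Finset.range n, max 0 (b - j) ≤ b * (b + 1) := by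
  suffices h : 2 * ∑ j ∈ Finset.range n, max 0 (b - j) +
      max 0 (b - n) * (max 0 (b - n) + 1) ≤ b * (b + 1) by
    have : 0 ≤ max 0 (b - n) * (max 0 (b - n) + 1) := by positivity
    linarith
  induction n with
  | zero => simp [hb]
  | succ n ih =>
    rw [Finset.sum_range_succ]
    push_cast
    rcases le_or_gt (b - n) 0 with h | h
    · rw [max_eq_left h] at ih ⊢
      rw [max_eq_left (by omega : b - (n + 1) ≤ 0)]
      linarith
    · rw [max_eq_right h.le] at ih ⊢
      rw [max_eq_right (by omega : 0 ≤ b - (n + 1))]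
      linarith

lemma sum_range_succ_div_two (N : ℕ) :
    ∑ i ∈ Finset.range N, (i + 1) / 2 = N / 2 * ((N + 1) / 2) := by
  induction N with
  | zero => simp
  | succ N ih =>
    rw [Finset.sum_range_succ, ih]
    obtain ⟨h, rfl | rfl⟩ := N.even_or_odd'
    · rw [show 2 * h / 2 = h by omega, show (2 * h + 1) / 2 = h by omega,
        show (2 * h + 1 + 1) / 2 = h + 1 by omega]
      ring
    · rw [show (2 * h + 1) / 2 = h by omega, show (2 * h + 1 + 1) / 2 = h + 1 by omega,
        show (2 * h + 1 + 1 + 1) / 2 = h + 1 by omega]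
      ring

/-- `q ^ (-c(n,k)) * d_{n,k}` involves no negative powers of `q`. -/
lemma T_neg_cExp_mul_dd_mem_range (n : ℕ) (k c : ℤ) :
    T (-cExp n k) * dd n k c ∈ (toLaurent : (ℚ[X])[X] →+* RQ).range := by
  unfold cExp
  split_ifs with h₁ h₂
  · exact T_mul_dd_mem_range n k c (fun _ => 0) (fun _ => 0) (by simp)
      (by intro i hi j hj h; omega) _ (by simp)
  · refine T_mul_dd_mem_range n k c (fun i => i) (fun j => -j - k)
      (by intro i hi j hj h; omega) (by intro i hi j hj h; omega) _ (le_of_eq ?_)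
    simp [Finset.sum_sub_distrib, ← add_sub_assoc]
  · obtain ⟨N, hN⟩ : ∃ N : ℕ, (n : ℤ) - k = N :=
      ⟨((n : ℤ) - k).toNat, by omega⟩
    rw [hN, Int.toNat_natCast, sum_range_succ_div_two, neg_neg]
    refine T_mul_dd_mem_range n k c (fun i => max 0 ((i : ℤ) - (k + (N / 2 : ℕ))))
      (fun j => max 0 (((N / 2 : ℕ) : ℤ) - j))
      (by intro i hi j hj h; positivity) (by intro i hi j hj h; omega) _ ?_
    have hrow := two_mul_sum_range_max_sub_le n (k + (N / 2 : ℕ))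
    have hcol := two_mul_sum_range_max_rsub_le n ((N / 2 : ℕ) : ℤ) (by positivity)
    obtain ⟨h, rfl | rfl⟩ := N.even_or_odd'
    · rw [show 2 * h / 2 = h by omega] at *
      rw [show (2 * h + 1) / 2 = h by omega]
      rcases Nat.eq_zero_or_pos h with rfl | hh
      · rw [max_eq_left (by omega)] at hrow
        push_cast at *
        linarith
      · rw [show (n : ℤ) - 1 - (k + h) = h - 1 by omega, max_eq_right (by omega)] at hrow
        push_cast at *
        linarith
    · rw [show (2 * h + 1) / 2 = h by omega] at *
      rw [show (2 * h + 1 + 1) / 2 = h + 1 by omega]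
      rw [show (n : ℤ) - 1 - (k + h) = h by omega, max_eq_right (by omega)] at hrow
      push_cast at *
      linarith

/-- The specialization `x ↦ a`, from ℚ[x][q,q⁻¹] to ℚ[q,q⁻¹]. -/
noncomputable def specializeX (a : ℚ) : RQ →+* ℚ[T;T⁻¹] :=
  LaurentPolynomial.eval₂ (LaurentPolynomial.C.comp (evalRingHom a)) (isUnit_T 1).unit

lemma specializeX_C (a : ℚ) (p : ℚ[X]) :
    specializeX a (LaurentPolynomial.C p) = LaurentPolynomial.C (p.eval a) := by
  simp [specializeX]

lemma specializeX_toLaurent (a : ℚ) (g : (ℚ[X])[X]) :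
    specializeX a (toLaurent g) = toLaurent (g.map (evalRingHom a)) := by
  rw [specializeX, LaurentPolynomial.eval₂_toLaurent]
  induction g using Polynomial.induction_on' with
  | add p q hp hq => simp only [Polynomial.eval₂_add, Polynomial.map_add, map_add, hp, hq]
  | monomial m p => simp [Polynomial.toLaurent_C_mul_T]

lemma eval_binomQ_eq_zero {i j r : ℕ} (hi : i < r) (hij : r ≤ i + j) :
    (binomQ (X + Polynomial.C ((0 : ℤ) : ℚ) + (i : ℚ[X]) + (j : ℚ[X])) j).eval (-(r : ℚ)) = 0 := by
  rw [binomQ, eval_mul, eval_prod]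
  refine mul_eq_zero_of_right _ (Finset.prod_eq_zero (i := i + j - r) ?_ ?_)
  · rw [Finset.mem_range]; omega
  · push_cast [Nat.cast_sub hij]
    simp
    ring

/-- If `i₀ < r ≤ n` and `r - 1 - 2 * i₀ + k = 0`, then at `x = -r` the rows `i₀, …, r - 1` of
`D_{n,k}` are supported on the first `r - 1 - i₀` columns, so `d_{n,k}(-r, q) = 0`. -/
lemma specializeX_dd_eq_zero (n : ℕ) (k : ℤ) (r i₀ : ℕ) (hi₀ : i₀ < r) (hr : r ≤ n)
    (hk : (r : ℤ) - 1 - 2 * i₀ + k = 0) :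
    specializeX (-(r : ℚ)) (dd n k 0) = 0 := by
  rw [dd, RingHom.map_det, Matrix.det_apply]
  refine Finset.sum_eq_zero fun σ _ => ?_
  obtain ⟨j, hj, hσ, hσr⟩ : ∃ j : Fin n, r - 1 - i₀ ≤ (j : ℕ) ∧ i₀ ≤ (σ j : ℕ) ∧
      (σ j : ℕ) < r := by
    by_contra! hcon
    have hmaps : ∀ i ∈ Finset.Ico i₀ r,
        (if h : i < n then (σ.symm ⟨i, h⟩ : ℕ) else 0) ∈ Finset.range (r - 1 - i₀) := by
      intro i hi
      rw [Finset.mem_Ico] at hi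
      rw [dif_pos (hi.2.trans_le hr), Finset.mem_range]
      by_contra! hle
      have := hcon _ hle (by simpa using hi.1)
      simp at this
      omega
    obtain ⟨i, hi, i', hi', hne, heq⟩ := Finset.exists_ne_map_eq_of_card_lt_of_maps_to
      (by rw [Finset.card_range, Nat.card_Ico]; omega) hmaps
    rw [Finset.mem_Ico] at hi hi'
    rw [dif_pos (hi.2.trans_le hr), dif_pos (hi'.2.trans_le hr)] at heq
    exact hne (by simpa using σ.symm.injective (Fin.ext heq))
  rw [Finset.prod_eq_zero (Finset.mem_univ j), smul_zero]
  simp only [RingHom.mapMatrix_apply, Matrix.map_apply, Dmat, Matrix.of_apply, map_mul]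
  rcases le_or_gt r ((σ j : ℕ) + j) with h | h
  · rw [specializeX_C, eval_binomQ_eq_zero hσr h, map_zero, zero_mul]
  · rw [show ((j : ℕ) : ℤ) - ((σ j : ℕ) : ℤ) + k = 0 by omega]
    simp [aQ]

lemma pPoly_ne_zero (n : ℕ) (k : ℤ) : pPoly n k ≠ 0 := by
  refine mul_ne_zero ?_ (Finset.prod_ne_zero_iff.mpr fun i _ => X_add_C_ne_zero _)
  rw [Ne, Polynomial.C_eq_zero]
  exact Finset.prod_ne_zero_iff.mpr fun i _ => by positivity

lemma pPoly_dvd {n : ℕ} {k : ℤ} {g : ℚ[X]}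
    (h : ∀ i < (n - k.natAbs + 1) / 2, g.eval (-((k.natAbs + 2 * i + 1 : ℕ) : ℚ)) = 0) :
    pPoly n k ∣ g := by
  have hunit : IsUnit (Polynomial.C (∏ i ∈ Finset.range (n - 1),
      (((i + 1) / 2).factorial : ℚ) / ((i + 1).factorial : ℚ))) := by
    rw [Polynomial.isUnit_C, isUnit_iff_ne_zero]
    exact Finset.prod_ne_zero_iff.mpr fun i _ => by positivity
  rw [pPoly, hunit.mul_left_dvd]
  refine Finset.prod_dvd_of_coprime (fun i _ i' _ hne => ?_) fun i hi => ?_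
  · have := isCoprime_X_sub_C_of_isUnit_sub (R := ℚ)
      (a := -((k.natAbs : ℚ) + 2 * i + 1)) (b := -((k.natAbs : ℚ) + 2 * i' + 1)) (by
        rw [isUnit_iff_ne_zero]
        intro h0
        exact hne (by exact_mod_cast (by linarith : (i : ℚ) = i')))
    simpa only [Function.onFun, Polynomial.C_neg, sub_neg_eq_add] using this
  · have := dvd_iff_isRoot.mpr (h i (Finset.mem_range.mp hi))
    rw [Polynomial.C_neg, sub_neg_eq_add] at this
    exact_mod_cast this

/-- for every positive n and integer k there is a unique polynomial
f_{n,k}(x,q) ∈ ℚ[x][q] with d_{n,k}(x,q) = q^{c(n,k)}·p_{n,k}(x)·f_{n,k}(x,q)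
in ℚ[x][q,q⁻¹]. -/
theorem statement6 (n : ℕ) (hn : 1 ≤ n) (k : ℤ) :
    ∃! f : Polynomial (Polynomial ℚ),
      dd n k 0 = LaurentPolynomial.T (cExp n k) * LaurentPolynomial.C (pPoly n k) *
        Polynomial.toLaurent f := by
  obtain ⟨g, hg⟩ := T_neg_cExp_mul_dd_mem_range n k 0
  have hdvd : Polynomial.C (pPoly n k) ∣ g := by
    rw [C_dvd_iff_dvd_coeff]
    refine fun m => pPoly_dvd fun i hi => ?_
    have hzero : g.map (evalRingHom (-((k.natAbs + 2 * i + 1 : ℕ) : ℚ))) = 0 := by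
      apply toLaurent_injective
      rw [← specializeX_toLaurent, hg, map_mul,
        specializeX_dd_eq_zero n k _ ((k.natAbs + 2 * i + k) / 2).toNat
          (by omega) (by omega) (by omega), mul_zero, map_zero]
    simpa using congrArg (fun p => p.coeff m) hzero
  obtain ⟨f, rfl⟩ := hdvd
  have hdd : dd n k 0 = T (cExp n k) * LaurentPolynomial.C (pPoly n k) * toLaurent f := by
    rw [mul_assoc, ← toLaurent_C, ← map_mul, hg, ← mul_assoc, ← T_add, add_neg_cancel, T_zero,
      one_mul]
  refine ⟨f, hdd, fun f' hf' => toLaurent_injective ?_⟩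
  have hC : LaurentPolynomial.C (pPoly n k) ≠ 0 := by
    rw [← toLaurent_C]
    exact (toLaurent_ne_zero).mpr (Polynomial.C_ne_zero.mpr (pPoly_ne_zero n k))
  exact mul_left_cancel₀ (mul_ne_zero (isUnit_T _).ne_zero hC) (hf'.symm.trans hdd)

end
end

section
/- Let n be a positive integer and write d_{n,1}(x,q) = ∑_{m∈ℤ} C_m(x)·q^m with C_m(x) ∈ ℚ[x]. Set M := ⌊(n−1)²/4⌋. Then C_m = 0 for every m > M, and C_M(x) is a polynomial in x of degree ⌊n²/4⌋ whose leading coefficient is ∏_{i=1}^{n−1} ⌊i/2⌋!/i!. -/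
open Polynomial LaurentPolynomial Finset

noncomputable section

theorem LaurentPolynomial.coeff_mul_add_of_bounded {R : Type*} [Semiring R] {f g : R[T;T⁻¹]}
    {a b : ℤ} (hf : ∀ d, a < d → f.coeff d = 0) (hg : ∀ d, b < d → g.coeff d = 0) :
    (∀ d, a + b < d → (f * g).coeff d = 0) ∧
      (f * g).coeff (a + b) = f.coeff a * g.coeff b := by
  classical
  constructor
  · intro d hd
    rw [AddMonoidAlgebra.coeff_mul]
    refine Finset.sum_eq_zero fun r _ => Finset.sum_eq_zero fun s _ => ?_
    dsimp only
    split_ifs with h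
    · rcases lt_or_ge a r with hr | hr
      · simp [hf r hr]
      · simp [hg s (by omega)]
    · rfl
  · rw [AddMonoidAlgebra.coeff_mul, Finsupp.sum, Finset.sum_eq_single a]
    · rw [Finsupp.sum, Finset.sum_eq_single b]
      · simp
      · intro s _ hs
        rw [if_neg (by omega)]
      · intro hb
        simp [Finsupp.notMem_support_iff.mp hb]
    · intro r _ hr
      refine Finset.sum_eq_zero fun s _ => ?_
      dsimp only
      split_ifs with h
      · rcases lt_or_ge a r with hr' | hr'
        · simp [hf r hr']
        · simp [hg s (by omega)]
      · rfl
    · intro ha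
      simp [Finsupp.notMem_support_iff.mp ha]

theorem LaurentPolynomial.coeff_prod_sum_of_bounded {R ι : Type*} [CommSemiring R] (s : Finset ι)
    (f : ι → R[T;T⁻¹]) (a : ι → ℤ) (hf : ∀ i, ∀ d, a i < d → (f i).coeff d = 0) :
    (∀ d, ∑ i ∈ s, a i < d → (∏ i ∈ s, f i).coeff d = 0) ∧
      (∏ i ∈ s, f i).coeff (∑ i ∈ s, a i) = ∏ i ∈ s, (f i).coeff (a i) := by
  classical
  induction s using Finset.induction_on with
  | empty =>
    rw [prod_empty, ← LaurentPolynomial.T_zero]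
    refine ⟨fun d hd => ?_, by simp [-LaurentPolynomial.T_zero]⟩
    rw [LaurentPolynomial.T_apply, if_neg (by simpa using hd.ne)]
  | insert i s hi ih =>
    rw [prod_insert hi, prod_insert hi, sum_insert hi, ← ih.2]
    exact LaurentPolynomial.coeff_mul_add_of_bounded (hf i) ih.1

/-- If the `q`-degree of the `(i, j)` entry is at most `u i + v j`, then the determinant has degree
at most `∑ u + ∑ v`, and its coefficient there is the determinant of the entrywise coefficients. -/
theorem LaurentPolynomial.coeff_det_of_bounded {R ι : Type*} [CommRing R] [Fintype ι]
    [DecidableEq ι] (A : Matrix ι ι R[T;T⁻¹]) (u v : ι → ℤ)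
    (hA : ∀ i j, ∀ d, u i + v j < d → (A i j).coeff d = 0) :
    (∀ d, ∑ i, (u i + v i) < d → A.det.coeff d = 0) ∧
      A.det.coeff (∑ i, (u i + v i)) =
        (Matrix.of fun i j => (A i j).coeff (u i + v j)).det := by
  have hsum (σ : Equiv.Perm ι) : ∑ i, (u (σ i) + v i) = ∑ i, (u i + v i) := by
    rw [sum_add_distrib, sum_add_distrib, Equiv.sum_comp σ u]
  have key (σ : Equiv.Perm ι) := LaurentPolynomial.coeff_prod_sum_of_bounded univ
    (fun i => A (σ i) i) (fun i => u (σ i) + v i) fun i => hA (σ i) i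
  have hcoeff (d : ℤ) : A.det.coeff d =
      ∑ σ : Equiv.Perm ι, Equiv.Perm.sign σ • (∏ i, A (σ i) i).coeff d := by
    rw [Matrix.det_apply, AddMonoidAlgebra.coeff_sum, Finsupp.finsetSum_apply]
    refine sum_congr rfl fun σ _ => ?_
    rcases Int.units_eq_one_or (Equiv.Perm.sign σ) with h | h <;> simp [h]
  constructor
  · intro d hd
    rw [hcoeff]
    refine sum_eq_zero fun σ _ => ?_
    rw [(key σ).1 d (by rwa [hsum]), smul_zero]
  · rw [hcoeff, Matrix.det_apply]
    refine sum_congr rfl fun σ _ => ?_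
    rw [← hsum σ, (key σ).2]
    rfl

theorem coe_finRotate_pow (n k : ℕ) (i : Fin n) :
    (((finRotate n) ^ k) i : ℕ) = (i + k) % n := by
  obtain _ | n := n
  · exact i.elim0
  induction k with
  | zero => simp [Nat.mod_eq_of_lt i.2]
  | succ k ih =>
    rw [pow_succ', Equiv.Perm.mul_apply, finRotate_apply, Fin.val_add, ih]
    simp [← add_assoc]

/-- Moving the first `b` columns to the end. -/
theorem Matrix.det_eq_det_fromBlocks_rotate {R : Type*} [CommRing R] (a b : ℕ) (f : ℕ → ℕ → R) :
    (Matrix.of fun i j : Fin (a + b) => f i j).det = (-1) ^ (a * b) *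
      (Matrix.fromBlocks (Matrix.of fun i j : Fin a => f i (b + j))
        (Matrix.of fun (i : Fin a) (j : Fin b) => f i j)
        (Matrix.of fun (i : Fin b) (j : Fin a) => f (a + i) (b + j))
        (Matrix.of fun i j : Fin b => f (a + i) j)).det := by
  have hsign : ((Equiv.Perm.sign ((finRotate (a + b)) ^ b) : ℤˣ) : R) = (-1) ^ (a * b) := by
    rw [map_pow, sign_finRotate, ← pow_mul]
    push_cast
    rcases b with _ | b
    · simp
    · have : (a + (b + 1) - 1) * (b + 1) = a * (b + 1) + b * (b + 1) := by
        rw [Nat.add_sub_assoc (by omega)]; simp [add_mul]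
      rw [this, pow_add, (Nat.even_mul_succ_self b).neg_one_pow, mul_one]
  have hblocks : Matrix.fromBlocks (Matrix.of fun i j : Fin a => f i (b + j))
        (Matrix.of fun (i : Fin a) (j : Fin b) => f i j)
        (Matrix.of fun (i : Fin b) (j : Fin a) => f (a + i) (b + j))
        (Matrix.of fun i j : Fin b => f (a + i) j) =
      ((Matrix.of fun i j : Fin (a + b) => f i j).submatrix id
        ((finRotate (a + b)) ^ b)).submatrix finSumFinEquiv finSumFinEquiv := by
    ext (i | i) (j | j)
    · simp [coe_finRotate_pow, add_comm b, Nat.mod_eq_of_lt]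
    · simp [coe_finRotate_pow, add_right_comm a, Nat.mod_eq_of_lt,
        (j.2.trans_le (by omega) : (j : ℕ) < a + b)]
    · simp [coe_finRotate_pow, add_comm b, Nat.mod_eq_of_lt]
    · simp [coe_finRotate_pow, add_right_comm a, Nat.mod_eq_of_lt,
        (j.2.trans_le (by omega) : (j : ℕ) < a + b)]
  rw [hblocks, Matrix.det_submatrix_equiv_self, Matrix.det_permute', hsign, ← mul_assoc,
    ← mul_pow]
  simp

theorem Matrix.det_mul_neg_one_pow_add {R : Type*} [CommRing R] (a b : ℕ) (g : ℕ → ℕ → R) :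
    (Matrix.of fun i j : Fin a => (-1) ^ ((i : ℕ) + (b + j)) * g i j).det =
      (-1) ^ (a * b) * (Matrix.of fun i j : Fin a => g i j).det := by
  have h : (Matrix.of fun i j : Fin a => (-1) ^ ((i : ℕ) + (b + j)) * g i j) =
      Matrix.of fun i j : Fin a => (-1) ^ (i : ℕ) * (Matrix.of fun i j : Fin a =>
        (-1) ^ (b + (j : ℕ)) * (Matrix.of fun i j : Fin a => g i j) i j) i j := by
    ext i j
    simp [pow_add, mul_assoc]
  rw [h, Matrix.det_mul_column, Matrix.det_mul_row, ← mul_assoc, ← prod_mul_distrib]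
  have h' (i : Fin a) : (-1 : R) ^ (i : ℕ) * (-1) ^ (b + (i : ℕ)) = (-1) ^ b := by
    rw [pow_add, mul_left_comm, ← mul_pow]; simp
  simp [h', ← pow_mul, mul_comm b]

theorem coeff_neg_one_pow_mul_T (l : ℕ) (e d : ℤ) :
    ((-1 : RQ) ^ l * LaurentPolynomial.T e).coeff d = if e = d then (-1) ^ l else 0 := by
  have h : (-1 : RQ) ^ l * LaurentPolynomial.T e =
      AddMonoidAlgebra.single e ((-1 : ℚ[X]) ^ l) := by
    rw [LaurentPolynomial.single_eq_C_mul_T]; simp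
  rw [h, AddMonoidAlgebra.coeff_single, Finsupp.single_apply]

theorem coeff_aQ_of_pos {z : ℤ} (hz : 0 < z) (d : ℤ) :
    (aQ z).coeff d = if 0 ≤ d ∧ d < z then (-1) ^ d.toNat else 0 := by
  rw [aQ, if_pos hz, AddMonoidAlgebra.coeff_sum, Finsupp.finsetSum_apply]
  simp_rw [coeff_neg_one_pow_mul_T]
  split_ifs with h
  · rw [sum_eq_single d.toNat]
    · rw [if_pos (by omega)]
    · intro l _ hl
      rw [if_neg (by omega)]
    · intro hd
      simp only [Finset.mem_range] at hd
      omega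
  · refine sum_eq_zero fun l hl => ?_
    rw [Finset.mem_range] at hl
    rw [if_neg (by omega)]

theorem coeff_aQ_of_nonpos {z : ℤ} (hz : z ≤ 0) (d : ℤ) :
    (aQ z).coeff d = if z ≤ d ∧ d < 0 then -(-1) ^ (-d).toNat else 0 := by
  rw [aQ, if_neg (not_lt.mpr hz), AddMonoidAlgebra.coeff_neg, AddMonoidAlgebra.coeff_sum,
    Finsupp.neg_apply, Finsupp.finsetSum_apply]
  simp_rw [coeff_neg_one_pow_mul_T]
  split_ifs with h
  · rw [sum_eq_single ((-d).toNat - 1)]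
    · rw [if_pos (by omega), Nat.sub_add_cancel (by omega)]
    · intro l _ hl
      rw [if_neg (by omega)]
    · intro hd
      simp only [Finset.mem_range] at hd
      omega
  · rw [neg_eq_zero]
    refine sum_eq_zero fun l hl => ?_
    rw [Finset.mem_range] at hl
    rw [if_neg (by omega)]

/-- The binomial factor `binom(x + i + j, j)` of the `(i, j)` entry, with indices from `0`. -/
def binomEntry (i j : ℕ) : ℚ[X] :=
  binomQ (Polynomial.X + Polynomial.C ((0 : ℤ) : ℚ) + (i : ℚ[X]) + (j : ℚ[X])) j

theorem coeff_Dmat (n : ℕ) (i j : Fin n) (d : ℤ) :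
    (Dmat n 1 0 i j).coeff d = binomEntry i j * (aQ ((j : ℤ) - i + 1)).coeff d := by
  rw [Dmat, Matrix.of_apply, ← LaurentPolynomial.smul_eq_C_mul, AddMonoidAlgebra.coeff_smul_apply,
    smul_eq_mul, binomEntry]

theorem binomEntry_eq (i j : ℕ) :
    binomEntry i j = Polynomial.C ((j.factorial : ℚ))⁻¹ *
      ∏ t ∈ range j, (Polynomial.X + (i : ℚ[X]) + 1 + (t : ℚ[X])) := by
  rw [binomEntry, binomQ, ← prod_range_reflect]
  congr 1
  refine prod_congr rfl fun t ht => ?_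
  rw [Finset.mem_range] at ht
  rw [Nat.cast_sub (by omega), Nat.cast_sub (by omega)]
  simp
  ring

theorem ascPochhammer_eval_eq_prod_range_add {R : Type*} [CommSemiring R] (n : ℕ) (y : R) :
    (ascPochhammer R n).eval y = ∏ t ∈ range n, (y + t) := by
  induction n with
  | zero => simp
  | succ n ih => rw [ascPochhammer_succ_eval, ih, prod_range_succ]

theorem Matrix.det_vandermonde_cast {R : Type*} [CommRing R] (r : ℕ) :
    (Matrix.vandermonde fun i : Fin r => (i : R)).det =
      ∏ k ∈ range r, (k.factorial : R) := by
  obtain _ | r := r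
  · simp
  · rw [Matrix.det_vandermonde_id_eq_superFactorial, ← Nat.prod_range_succ_factorial]
    push_cast
    rfl

theorem det_binomEntry (r s c : ℕ) :
    (Matrix.of fun i j : Fin r => binomEntry (s + i) (c + j)).det =
      Polynomial.C (∏ k ∈ range r, (k.factorial : ℚ) / ((c + k).factorial : ℚ)) *
        ∏ i ∈ range r, ∏ t ∈ range c, (Polynomial.X + Polynomial.C ((s + i + 1 + t : ℕ) : ℚ)) := by
  have h : (Matrix.of fun i j : Fin r => binomEntry (s + i) (c + j)) =
      Matrix.of fun i j : Fin r =>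
        (∏ t ∈ range c, (Polynomial.X + Polynomial.C ((s + i + 1 + t : ℕ) : ℚ))) *
          (Matrix.of fun i j : Fin r => Polynomial.C (((c + j).factorial : ℚ))⁻¹ *
            (Matrix.of fun i j : Fin r => (ascPochhammer ℚ[X] j).eval
              (((i : ℕ) : ℚ[X]) + (Polynomial.X + (s : ℚ[X]) + 1 + (c : ℚ[X])))) i j) i j := by
    ext1 i j
    simp only [Matrix.of_apply]
    rw [binomEntry_eq, prod_range_add, ascPochhammer_eval_eq_prod_range_add, mul_left_comm]
    congr 1
    · refine prod_congr rfl fun t _ => ?_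
      simp
      ring
    · congr 1
      refine prod_congr rfl fun t _ => ?_
      push_cast
      ring
  rw [h, Matrix.det_mul_column, Matrix.det_mul_row,
    ← Matrix.det_eval_matrixOfPolynomials_eq_det_vandermonde _ (fun j : Fin r => ascPochhammer _ j)
      (fun j => ascPochhammer_natDegree _ _) (fun j => monic_ascPochhammer _ _),
    Matrix.det_vandermonde_add, Matrix.det_vandermonde_cast,
    Fin.prod_univ_eq_prod_range
      (fun i => ∏ t ∈ range c, (Polynomial.X + Polynomial.C ((s + i + 1 + t : ℕ) : ℚ))),
    Fin.prod_univ_eq_prod_range (fun k => Polynomial.C (((c + k).factorial : ℚ))⁻¹),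
    ← prod_mul_distrib, mul_comm, map_prod]
  congr 1
  refine prod_congr rfl fun k _ => ?_
  rw [div_eq_inv_mul, map_mul, Polynomial.C_eq_natCast]

theorem det_binomEntry_zero (r s : ℕ) :
    (Matrix.of fun i j : Fin r => binomEntry (s + i) j).det = 1 := by
  have h := det_binomEntry r s 0
  simp only [Nat.zero_add] at h
  rw [h]
  simp [Nat.factorial_ne_zero]

theorem monic_prod_X_add (r s c : ℕ) :
    (∏ i ∈ range r, ∏ t ∈ range c,
      (Polynomial.X + Polynomial.C ((s + i + 1 + t : ℕ) : ℚ))).Monic :=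
  monic_prod_of_monic _ _ fun _ _ => monic_prod_of_monic _ _ fun _ _ => monic_X_add_C _

theorem leadingCoeff_det_binomEntry (r s c : ℕ) :
    (Matrix.of fun i j : Fin r => binomEntry (s + i) (c + j)).det.leadingCoeff =
      ∏ k ∈ range r, (k.factorial : ℚ) / ((c + k).factorial : ℚ) := by
  rw [det_binomEntry, leadingCoeff_mul, leadingCoeff_C, monic_prod_X_add, mul_one]

theorem natDegree_det_binomEntry (r s c : ℕ) :
    (Matrix.of fun i j : Fin r => binomEntry (s + i) (c + j)).det.natDegree = r * c := by
  rw [det_binomEntry, natDegree_C_mul, natDegree_prod_of_monic _ _ fun _ _ =>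
    monic_prod_of_monic _ _ fun _ _ => monic_X_add_C _]
  · simp_rw [natDegree_prod_of_monic _ _ fun _ _ => monic_X_add_C _, natDegree_X_add_C]
    simp
  · exact prod_ne_zero_iff.mpr fun k _ => by positivity

theorem prod_range_factorial_div_factorial_succ (r c : ℕ) :
    ∏ k ∈ range r, (k.factorial : ℚ) / ((c + 1 + k).factorial : ℚ) =
      (∏ k ∈ range r, (k.factorial : ℚ) / ((c + k).factorial : ℚ)) *
        (c.factorial / (c + r).factorial) := by
  induction r with
  | zero => simp [Nat.factorial_ne_zero]
  | succ r ih =>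
    rw [prod_range_succ, ih, prod_range_succ, show c + 1 + r = c + (r + 1) by ring]
    field_simp

theorem prod_factorial_half_div_factorial (m : ℕ) :
    ∏ i ∈ range (2 * m), (((i + 1) / 2).factorial : ℚ) / ((i + 1).factorial : ℚ) =
        ∏ k ∈ range (m + 1), (k.factorial : ℚ) / ((m + k).factorial : ℚ) ∧
      ∏ i ∈ range (2 * m + 1), (((i + 1) / 2).factorial : ℚ) / ((i + 1).factorial : ℚ) =
        ∏ k ∈ range (m + 1), (k.factorial : ℚ) / ((m + 1 + k).factorial : ℚ) := by
  have step {m : ℕ} (h : ∏ i ∈ range (2 * m),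
      (((i + 1) / 2).factorial : ℚ) / ((i + 1).factorial : ℚ) =
        ∏ k ∈ range (m + 1), (k.factorial : ℚ) / ((m + k).factorial : ℚ)) :
      ∏ i ∈ range (2 * m + 1), (((i + 1) / 2).factorial : ℚ) / ((i + 1).factorial : ℚ) =
        ∏ k ∈ range (m + 1), (k.factorial : ℚ) / ((m + 1 + k).factorial : ℚ) := by
    rw [prod_range_succ, h, prod_range_factorial_div_factorial_succ,
      show (2 * m + 1) / 2 = m by omega, show m + (m + 1) = 2 * m + 1 by ring]
  suffices h : ∏ i ∈ range (2 * m), (((i + 1) / 2).factorial : ℚ) / ((i + 1).factorial : ℚ) =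
      ∏ k ∈ range (m + 1), (k.factorial : ℚ) / ((m + k).factorial : ℚ) from ⟨h, step h⟩
  induction m with
  | zero => simp
  | succ m ih =>
    rw [show 2 * (m + 1) = 2 * m + 1 + 1 by ring, prod_range_succ, step ih,
      prod_range_succ _ (m + 1), show (2 * m + 1 + 1) / 2 = m + 1 by omega,
      show m + 1 + (m + 1) = 2 * m + 1 + 1 by ring]

/-- The matrix of binomial entries which has, with signs, only the columns `j ≥ m - 1` in the rows
`i < a`, and only the columns `j < m` in the rows `i ≥ a`. -/
def signBlock (a m i j : ℕ) : ℚ[X] :=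
  if i < a then if m ≤ j + 1 then (-1) ^ (i + j) * binomEntry i j else 0
  else if j < m then binomEntry i j else 0

theorem coeff_Dmat_eq_zero (n m : ℕ) (i j : Fin n) (d : ℤ)
    (hd : max ((m : ℤ) - i) 0 + max ((j : ℤ) - m) (-1) < d) : (Dmat n 1 0 i j).coeff d = 0 := by
  rw [coeff_Dmat]
  rcases lt_or_ge 0 ((j : ℤ) - i + 1) with hz | hz
  · rw [coeff_aQ_of_pos hz, if_neg (by omega), mul_zero]
  · rw [coeff_aQ_of_nonpos hz, if_neg (by omega), mul_zero]

theorem coeff_Dmat_max (n m : ℕ) (i j : Fin n) :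
    (Dmat n 1 0 i j).coeff (max ((m : ℤ) - i) 0 + max ((j : ℤ) - m) (-1)) =
      if (i : ℕ) = m then signBlock (m + 1) m i j + signBlock m m i j
      else signBlock (m + 1) m i j := by
  have hsign (h : (i : ℕ) ≤ j) : (-1 : ℚ[X]) ^ ((j : ℤ) - i).toNat = (-1) ^ ((i : ℕ) + j) := by
    rw [show (i : ℕ) + j = ((j : ℤ) - i).toNat + 2 * i by omega, pow_add, pow_mul]
    simp
  rw [coeff_Dmat]
  simp only [signBlock]
  rcases lt_trichotomy (i : ℕ) m with hi | hi | hi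
  · rw [if_neg hi.ne, if_pos (by omega)]
    by_cases hj : m ≤ j + 1
    · rw [if_pos hj, coeff_aQ_of_pos (by omega), if_pos (by omega), ← hsign (by omega), mul_comm]
      congr 3
      omega
    · rw [if_neg hj]
      rcases lt_or_ge 0 ((j : ℤ) - i + 1) with hz | hz
      · rw [coeff_aQ_of_pos hz, if_neg (by omega), mul_zero]
      · rw [coeff_aQ_of_nonpos hz, if_neg (by omega), mul_zero]
  · rw [if_pos hi, if_pos (show (i : ℕ) < m + 1 by omega), if_neg (show ¬(i : ℕ) < m by omega)]
    rcases lt_trichotomy ((j : ℕ) + 1) m with hj | hj | hj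
    · rw [if_neg (by omega), if_pos (by omega), coeff_aQ_of_nonpos (by omega), if_pos (by omega),
        show (-(max ((m : ℤ) - i) 0 + max ((j : ℤ) - m) (-1))).toNat = 1 by omega]
      simp
    · rw [if_pos (by omega), if_pos (by omega), coeff_aQ_of_nonpos (by omega), if_neg (by omega),
        show (i : ℕ) + j = 2 * j + 1 by omega, pow_succ, pow_mul]
      simp
    · rw [if_pos (by omega), if_neg (by omega), coeff_aQ_of_pos (by omega), if_pos (by omega),
        ← hsign (by omega), mul_comm, add_zero]
      congr 3
      omega
  · rw [if_neg hi.ne', if_neg (by omega)]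
    by_cases hj : (j : ℕ) < m
    · rw [if_pos hj, coeff_aQ_of_nonpos (by omega), if_pos (by omega),
        show (-(max ((m : ℤ) - i) 0 + max ((j : ℤ) - m) (-1))).toNat = 1 by omega]
      simp
    · rw [if_neg hj]
      rcases lt_or_ge 0 ((j : ℤ) - i + 1) with hz | hz
      · rw [coeff_aQ_of_pos hz, if_neg (by omega), mul_zero]
      · rw [coeff_aQ_of_nonpos hz, if_neg (by omega), mul_zero]

theorem coeff_dd (n m : ℕ) (hm : m < n) (M : ℤ)
    (hM : ∑ i : Fin n, (max ((m : ℤ) - (i : ℕ)) 0 + max (((i : ℕ) : ℤ) - m) (-1)) = M) :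
    (∀ d, M < d → (dd n 1 0).coeff d = 0) ∧
      (dd n 1 0).coeff M = (Matrix.of fun i j : Fin n => signBlock (m + 1) m i j).det +
        (Matrix.of fun i j : Fin n => signBlock m m i j).det := by
  obtain ⟨hzero, htop⟩ := LaurentPolynomial.coeff_det_of_bounded (Dmat n 1 0)
    (fun i => max ((m : ℤ) - (i : ℕ)) 0) (fun j => max (((j : ℕ) : ℤ) - m) (-1))
    (coeff_Dmat_eq_zero n m)
  rw [hM] at hzero htop
  refine ⟨hzero, htop.trans ?_⟩
  set A := Matrix.of fun i j : Fin n => signBlock (m + 1) m i j with hA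
  have h₁ : (Matrix.of fun i j : Fin n => signBlock m m i j) =
      A.updateRow ⟨m, hm⟩ fun j => signBlock m m m j := by
    ext1 i j
    by_cases hi : i = ⟨m, hm⟩
    · subst hi
      simp
    · have hi' : (i : ℕ) ≠ m := fun h => hi (Fin.ext h)
      rw [Matrix.updateRow_ne hi, hA, Matrix.of_apply, Matrix.of_apply, signBlock, signBlock]
      congr 1
      simp only [eq_iff_iff]
      omega
  have h₂ : (Matrix.of fun i j : Fin n => (Dmat n 1 0 i j).coeff
        (max ((m : ℤ) - (i : ℕ)) 0 + max (((j : ℕ) : ℤ) - m) (-1))) =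
      A.updateRow ⟨m, hm⟩ (A ⟨m, hm⟩ + fun j : Fin n => signBlock m m m j) := by
    ext1 i j
    rw [Matrix.of_apply, coeff_Dmat_max]
    by_cases hi : i = ⟨m, hm⟩
    · subst hi
      simp [hA]
    · have hi' : (i : ℕ) ≠ m := fun h => hi (Fin.ext h)
      rw [Matrix.updateRow_ne hi, if_neg hi', hA, Matrix.of_apply]
  rw [h₂, Matrix.det_updateRow_add, Matrix.updateRow_eq_self, ← h₁]

theorem det_signBlock (a b m : ℕ) (h : m = b ∨ m = b + 1) :
    (Matrix.of fun i j : Fin (a + b) => signBlock a m i j).det =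
      (Matrix.of fun i j : Fin a => binomEntry i (b + j)).det := by
  have htr : (Matrix.of fun i j : Fin a => signBlock a m i (b + j)) =
      Matrix.of fun i j : Fin a => (-1) ^ ((i : ℕ) + (b + j)) * binomEntry i (b + j) := by
    ext1 i j
    rw [Matrix.of_apply, Matrix.of_apply, signBlock, if_pos i.2, if_pos (by omega)]
  have hbl : (Matrix.of fun i j : Fin b => signBlock a m (a + i) j) =
      Matrix.of fun i j : Fin b => binomEntry (a + i) j := by
    ext1 i j
    rw [Matrix.of_apply, Matrix.of_apply, signBlock, if_neg (by omega), if_pos (by omega)]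
  rw [Matrix.det_eq_det_fromBlocks_rotate]
  have hdet : (Matrix.fromBlocks (Matrix.of fun i j : Fin a => signBlock a m i (b + j))
        (Matrix.of fun (i : Fin a) (j : Fin b) => signBlock a m i j)
        (Matrix.of fun (i : Fin b) (j : Fin a) => signBlock a m (a + i) (b + j))
        (Matrix.of fun i j : Fin b => signBlock a m (a + i) j)).det =
      (Matrix.of fun i j : Fin a => signBlock a m i (b + j)).det *
        (Matrix.of fun i j : Fin b => signBlock a m (a + i) j).det := by
    rcases h with h | h
    · rw [← Matrix.det_fromBlocks_zero₂₁]
      congr 2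
      ext1 i j
      rw [Matrix.of_apply, signBlock, if_neg (by omega), if_neg (by omega), Matrix.zero_apply]
    · rw [← Matrix.det_fromBlocks_zero₁₂]
      congr 2
      ext1 i j
      rw [Matrix.of_apply, signBlock, if_pos i.2, if_neg (by omega), Matrix.zero_apply]
  rw [hdet, htr, hbl, det_binomEntry_zero,
    Matrix.det_mul_neg_one_pow_add a b fun i j => binomEntry i (b + j), mul_one, ← mul_assoc,
    ← mul_pow]
  simp

theorem det_signBlock_eq_zero (m : ℕ) :
    (Matrix.of fun i j : Fin (m + (m + 1)) => signBlock m m i j).det = 0 := by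
  have hbr : (Matrix.of fun (i : Fin (m + 1)) (j : Fin m) =>
      signBlock m m (m + i) (m + 1 + j)) = 0 := by
    ext1 i j
    rw [Matrix.of_apply, signBlock, if_neg (by omega), if_neg (by omega), Matrix.zero_apply]
  have hbl : (Matrix.of fun i j : Fin (m + 1) => signBlock m m (m + i) j).det = 0 := by
    refine Matrix.det_eq_zero_of_column_eq_zero (Fin.last m) fun i => ?_
    rw [Matrix.of_apply, signBlock, if_neg (by omega), if_neg (by simp)]
  rw [Matrix.det_eq_det_fromBlocks_rotate, hbr, Matrix.det_fromBlocks_zero₂₁, hbl, mul_zero,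
    mul_zero]

theorem sum_range_max_add_max (m k : ℕ) :
    ∑ i ∈ range (m + k), (max ((m : ℤ) - (i : ℕ)) 0 + max ((i : ℤ) - m) (-1)) =
      ∑ i ∈ range m, (i : ℤ) + ∑ i ∈ range k, (i : ℤ) := by
  rw [sum_range_add, ← sum_range_reflect (fun i => (i : ℤ)) m]
  congr 1
  · refine sum_congr rfl fun i hi => ?_
    rw [Finset.mem_range] at hi
    omega
  · refine sum_congr rfl fun i _ => ?_
    push_cast
    omega

theorem sum_range_cast_mul_two (m : ℕ) : (∑ i ∈ range m, (i : ℤ)) * 2 = m * (m - 1) := by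
  induction m with
  | zero => simp
  | succ m ih =>
    rw [sum_range_succ, add_mul, ih]
    push_cast
    ring

/-- writing d_{n,1}(x,q) = ∑_m C_m(x)·q^m (here C_m(x) = (dd n 1 0) m, the
coefficient of q^m), with M := ⌊(n-1)²/4⌋ we have C_m = 0 for m > M, and C_M has degree
⌊n²/4⌋ with leading coefficient ∏_{i=1}^{n-1}⌊i/2⌋!/i!. -/
theorem statement7 (n : ℕ) (hn : 1 ≤ n) :
    (∀ m : ℤ, (((n - 1) ^ 2 / 4 : ℕ) : ℤ) < m → (dd n 1 0).coeff m = 0) ∧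
    ((dd n 1 0).coeff (((n - 1) ^ 2 / 4 : ℕ) : ℤ)).natDegree = n ^ 2 / 4 ∧
    ((dd n 1 0).coeff (((n - 1) ^ 2 / 4 : ℕ) : ℤ)).leadingCoeff =
      ∏ i ∈ Finset.range (n - 1),
        (((i + 1) / 2).factorial : ℚ) / ((i + 1).factorial : ℚ) := by
  obtain ⟨m, rfl | rfl⟩ : ∃ m, n = m + 1 + m ∨ n = m + 1 + (m + 1) :=
    ⟨(n - 1) / 2, by omega⟩
  · have hM : (((m + 1 + m - 1) ^ 2 / 4 : ℕ) : ℤ) = (m : ℤ) ^ 2 := by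
      rw [show m + 1 + m - 1 = 2 * m by omega, mul_pow, show 2 ^ 2 = 4 by norm_num,
        Nat.mul_div_cancel_left _ (by norm_num)]
      push_cast
      rfl
    have hn4 : (m + 1 + m) ^ 2 / 4 = (m + 1) * m := by
      rw [show (m + 1 + m) ^ 2 = 1 + 4 * ((m + 1) * m) by ring]
      omega
    obtain ⟨hzero, htop⟩ := coeff_dd (m + 1 + m) m (by omega) (m ^ 2) (by
      rw [Fin.sum_univ_eq_sum_range
          fun i => max ((m : ℤ) - (i : ℕ)) 0 + max ((i : ℤ) - m) (-1),
        show m + 1 + m = m + (m + 1) by ring, sum_range_max_add_max]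
      have h₁ := sum_range_cast_mul_two m
      have h₂ := sum_range_cast_mul_two (m + 1)
      push_cast at h₂
      linarith)
    have hlower : (Matrix.of fun i j : Fin (m + 1 + m) => signBlock m m i j).det = 0 := by
      rw [show m + 1 + m = m + (m + 1) by ring]
      exact det_signBlock_eq_zero m
    have hdeg := natDegree_det_binomEntry (m + 1) 0 m
    have hlead := leadingCoeff_det_binomEntry (m + 1) 0 m
    simp only [Nat.zero_add] at hdeg hlead
    rw [hlower, add_zero, det_signBlock _ _ _ (Or.inl rfl)] at htop
    rw [hM, htop, hdeg, hlead, hn4, show m + 1 + m - 1 = 2 * m by omega]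
    exact ⟨hzero, rfl, (prod_factorial_half_div_factorial m).1.symm⟩
  · have hM : (((m + 1 + (m + 1) - 1) ^ 2 / 4 : ℕ) : ℤ) = (m : ℤ) * (m + 1) := by
      rw [show m + 1 + (m + 1) - 1 = 2 * m + 1 by omega,
        show (2 * m + 1) ^ 2 = 1 + 4 * (m * (m + 1)) by ring,
        Nat.add_mul_div_left _ _ (by norm_num)]
      push_cast
      ring
    have hn4 : (m + 1 + (m + 1)) ^ 2 / 4 = (m + 1) * (m + 1) := by
      rw [show (m + 1 + (m + 1)) ^ 2 = 4 * ((m + 1) * (m + 1)) by ring]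
      omega
    obtain ⟨hzero, htop⟩ := coeff_dd (m + 1 + (m + 1)) (m + 1) (by omega) (m * (m + 1)) (by
      rw [Fin.sum_univ_eq_sum_range
          fun i => max (((m + 1 : ℕ) : ℤ) - (i : ℕ)) 0 + max ((i : ℤ) - (m + 1 : ℕ)) (-1),
        sum_range_max_add_max]
      have h := sum_range_cast_mul_two (m + 1)
      push_cast at h
      linarith)
    have hupper : (Matrix.of fun i j : Fin (m + 1 + (m + 1)) =>
        signBlock (m + 1 + 1) (m + 1) i j).det =
          (Matrix.of fun i j : Fin (m + 1 + 1) => binomEntry i (m + j)).det := by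
      rw [show m + 1 + (m + 1) = m + 1 + 1 + m by ring]
      exact det_signBlock _ _ _ (Or.inr rfl)
    have hdeg₁ := natDegree_det_binomEntry (m + 1 + 1) 0 m
    have hdeg₂ := natDegree_det_binomEntry (m + 1) 0 (m + 1)
    have hlead := leadingCoeff_det_binomEntry (m + 1) 0 (m + 1)
    simp only [Nat.zero_add] at hdeg₁ hdeg₂ hlead
    rw [hupper, det_signBlock _ _ _ (Or.inl rfl)] at htop
    have hlt := hdeg₁.trans_lt ((by ring_nf; omega :
      (m + 1 + 1) * m < (m + 1) * (m + 1)).trans_eq hdeg₂.symm)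
    rw [hM, htop, natDegree_add_eq_right_of_natDegree_lt hlt,
      leadingCoeff_add_of_degree_lt (degree_lt_degree hlt), hdeg₂, hlead, hn4,
      show m + 1 + (m + 1) - 1 = 2 * m + 1 by omega]
    exact ⟨hzero, rfl, (prod_factorial_half_div_factorial m).2.symm⟩

end
end
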